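/- Assume Ω is a bounded C¹ domain with 0 ∈ Ω, b is Lipschitz with b(0)=0, the origin is globally asymptotically stable for Ẋ = b(X), b(x)·x ≤ −b₀|x|² on B_{r₀}, and a^ε ∈ C(Q̄;𝕊ⁿ(θ₀)). For any δ > 0 there exist ε₀ ∈ (0,1), a family {τ(ε)}_{0<ε≤ε₀} ⊂ (0,∞) (both depending on r₀, θ₀, b, δ, n), a constant γ ∈ (0,1), and a constant C > 0 (depending on r₀, θ₀, b, δ, n) with τ(ε) ≤ C(|log ε| + 1) for all ε ∈ (0,ε₀], such that: if, for ε ∈ (0,ε₀], u^ε is a classical solution of (L) satisfying, for some T(ε) ∈ (τ(ε), ∞], u^ε ≤ 1 in B_{r₀}×(0,T(ε)) and u^ε(0,t) ≤ 0 for all t ∈ (0,T(ε)), then u^ε ≤ δ in B_{γr₀}×(τ(ε), T(ε)). -/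

import Mathlib

open Set Filter Metric Topology
open scoped ENNReal

noncomputable section

/-- `n`-dimensional Euclidean space. -/
abbrev Eu (n : ℕ) := EuclideanSpace ℝ (Fin n)

variable {n : ℕ}

/-- Euclidean dot product. -/
def dotp (x y : Eu n) : ℝ := ∑ i, x i * y i

/-- The quadratic form `A p · p` of a matrix `A`. -/
def mquad (A : Matrix (Fin n) (Fin n) ℝ) (p : Eu n) : ℝ := ∑ i, ∑ j, A i j * p i * p j

/-- `A ∈ 𝕊ⁿ(θ)`: symmetric with `θ I ≤ A ≤ θ⁻¹ I`. -/
def memS (θ : ℝ) (A : Matrix (Fin n) (Fin n) ℝ) : Prop :=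
  A.IsSymm ∧ ∀ p : Eu n, θ * ‖p‖ ^ 2 ≤ mquad A p ∧ mquad A p ≤ θ⁻¹ * ‖p‖ ^ 2

/-- order of symmetric matrices (via quadratic forms). -/
def mle (A B : Matrix (Fin n) (Fin n) ℝ) : Prop := ∀ p : Eu n, mquad A p ≤ mquad B p

/-- trace of the product `A·H`. -/
def trMul (A H : Matrix (Fin n) (Fin n) ℝ) : ℝ := ∑ i, ∑ j, A i j * H j i

/-- the Pucci maximal operator associated with `𝕊ⁿ(θ)`. -/
def pucci (θ : ℝ) (X : Matrix (Fin n) (Fin n) ℝ) : ℝ :=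
  sSup ((fun A => trMul A X) '' {A | memS θ A})

/-- time derivative of `u(x,t)`. -/
def tD (u : Eu n → ℝ → ℝ) (x : Eu n) (t : ℝ) : ℝ := deriv (u x) t

/-- spatial gradient of `u(x,t)`. -/
def sG (u : Eu n → ℝ → ℝ) (x : Eu n) (t : ℝ) : Eu n := gradient (fun y => u y t) x

/-- spatial Hessian matrix of `u(x,t)`. -/
def sH (u : Eu n → ℝ → ℝ) (x : Eu n) (t : ℝ) : Matrix (Fin n) (Fin n) ℝ :=
  fun i j => fderiv ℝ (fun y => sG u y t i) x (EuclideanSpace.single j 1)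

/-- Hessian matrix of a static function. -/
def hessS (v : Eu n → ℝ) (x : Eu n) : Matrix (Fin n) (Fin n) ℝ :=
  fun i j => fderiv ℝ (fun y => gradient v y i) x (EuclideanSpace.single j 1)

/-- closed parabolic cylinder `Q̄_T = closure Ω × [0,T]` (with `T ∈ (0,∞]`). -/
def cylC (Ω : Set (Eu n)) (T : ℝ≥0∞) : Set (Eu n × ℝ) :=
  {p | p.1 ∈ closure Ω ∧ 0 ≤ p.2 ∧ ENNReal.ofReal p.2 ≤ T}

/-- open parabolic cylinder `Q_T = Ω × (0,T)`. -/
def cylO (Ω : Set (Eu n)) (T : ℝ≥0∞) : Set (Eu n × ℝ) :=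
  {p | p.1 ∈ Ω ∧ 0 < p.2 ∧ ENNReal.ofReal p.2 < T}

/-- `u ∈ C^{2,1}(Q_T)`. -/
def C21 (u : Eu n → ℝ → ℝ) (Ω : Set (Eu n)) (T : ℝ≥0∞) : Prop :=
  (∀ x ∈ Ω, ∀ t : ℝ, 0 < t → ENNReal.ofReal t < T →
     ContDiffAt ℝ 2 (fun y => u y t) x ∧ DifferentiableAt ℝ (u x) t) ∧
  ContinuousOn (fun p : Eu n × ℝ => tD u p.1 p.2) (cylO Ω T) ∧
  ContinuousOn (fun p : Eu n × ℝ => sH u p.1 p.2) (cylO Ω T)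

/-- `u ∈ C(Q̄_T) ∩ C^{2,1}(Q_T)`. -/
def Classical21 (u : Eu n → ℝ → ℝ) (Ω : Set (Eu n)) (T : ℝ≥0∞) : Prop :=
  ContinuousOn (fun p : Eu n × ℝ => u p.1 p.2) (cylC Ω T) ∧ C21 u Ω T

/-- a coefficient field in `C(Q̄_T; 𝕊ⁿ(θ))`. -/
def MatC (θ : ℝ) (A : Eu n → ℝ → Matrix (Fin n) (Fin n) ℝ) (Ω : Set (Eu n))
    (T : ℝ≥0∞) : Prop :=
  ContinuousOn (fun p : Eu n × ℝ => A p.1 p.2) (cylC Ω T) ∧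
  ∀ p ∈ cylC Ω T, memS θ (A p.1 p.2)

/-- `u` is a classical solution of `u_t = ε tr[A D²u] + b·Du` in `Q_T`. -/
def SolveL (ε : ℝ) (A : Eu n → ℝ → Matrix (Fin n) (Fin n) ℝ) (b : Eu n → Eu n)
    (u : Eu n → ℝ → ℝ) (Ω : Set (Eu n)) (T : ℝ≥0∞) : Prop :=
  ∀ x ∈ Ω, ∀ t : ℝ, 0 < t → ENNReal.ofReal t < T →
    tD u x t = ε * trMul (A x t) (sH u x t) + dotp (b x) (sG u x t)

/-- `u` is a classical subsolution of `(L)` in `Q_T`. -/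
def SubsolL (ε : ℝ) (A : Eu n → ℝ → Matrix (Fin n) (Fin n) ℝ) (b : Eu n → Eu n)
    (u : Eu n → ℝ → ℝ) (Ω : Set (Eu n)) (T : ℝ≥0∞) : Prop :=
  ∀ x ∈ Ω, ∀ t : ℝ, 0 < t → ENNReal.ofReal t < T →
    tD u x t ≤ ε * trMul (A x t) (sH u x t) + dotp (b x) (sG u x t)

/-- `u` is a classical supersolution of `(L)` in `Q_T`. -/
def SupersolL (ε : ℝ) (A : Eu n → ℝ → Matrix (Fin n) (Fin n) ℝ) (b : Eu n → Eu n)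
    (u : Eu n → ℝ → ℝ) (Ω : Set (Eu n)) (T : ℝ≥0∞) : Prop :=
  ∀ x ∈ Ω, ∀ t : ℝ, 0 < t → ENNReal.ofReal t < T →
    ε * trMul (A x t) (sH u x t) + dotp (b x) (sG u x t) ≤ tD u x t

/-- viscosity subsolution of `H(x,Du) = 0` on `A`. -/
def ViscSub (H : Eu n → Eu n → ℝ) (A : Set (Eu n)) (u : Eu n → ℝ) : Prop :=
  ∀ φ : Eu n → ℝ, ContDiff ℝ 1 φ → ∀ x ∈ A,
    IsLocalMaxOn (fun y => u y - φ y) A x → H x (gradient φ x) ≤ 0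

/-- viscosity supersolution of `H(x,Du) = 0` on `A`. -/
def ViscSup (H : Eu n → Eu n → ℝ) (A : Set (Eu n)) (u : Eu n → ℝ) : Prop :=
  ∀ φ : Eu n → ℝ, ContDiff ℝ 1 φ → ∀ x ∈ A,
    IsLocalMinOn (fun y => u y - φ y) A x → 0 ≤ H x (gradient φ x)

/-- the Hamiltonian `H_α(x,p) = α(x) p·p + b(x)·p`. -/
def Ham (α : Eu n → Matrix (Fin n) (Fin n) ℝ) (b : Eu n → Eu n) (x p : Eu n) : ℝ :=
  mquad (α x) p + dotp (b x) p

/-- the quasi-potential `V_α`: the pointwise supremum (= maximal element) of all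
Lipschitz viscosity subsolutions of `H_α(x,Du)=0` in `Ω` vanishing at the origin. -/
def Vq (α : Eu n → Matrix (Fin n) (Fin n) ℝ) (b : Eu n → Eu n) (Ω : Set (Eu n))
    (x : Eu n) : ℝ :=
  sSup {r | ∃ u : Eu n → ℝ, (∃ K : NNReal, LipschitzOnWith K u (closure Ω)) ∧
    u 0 = 0 ∧ ViscSub (Ham α b) Ω u ∧ r = u x}

/-- `M_α = min_{∂Ω} V_α`. -/
def Mq (α : Eu n → Matrix (Fin n) (Fin n) ℝ) (b : Eu n → Eu n) (Ω : Set (Eu n)) : ℝ :=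
  sInf (Vq α b Ω '' frontier Ω)

/-- `argmin (V_α | ∂Ω)`. -/
def argminV (α : Eu n → Matrix (Fin n) (Fin n) ℝ) (b : Eu n → Eu n)
    (Ω : Set (Eu n)) : Set (Eu n) :=
  {x ∈ frontier Ω | ∀ y ∈ frontier Ω, Vq α b Ω x ≤ Vq α b Ω y}

/-- `Σ_α^m = {x ∈ Ω̄ : V_α(x) ≤ m}`. -/
def SigmaM (α : Eu n → Matrix (Fin n) (Fin n) ℝ) (b : Eu n → Eu n) (Ω : Set (Eu n))
    (m : ℝ) : Set (Eu n) :=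
  {x ∈ closure Ω | Vq α b Ω x ≤ m}

/-- `Ω` is a bounded `C¹` domain with outward unit normal `ν`. -/
def IsBdC1With (Ω : Set (Eu n)) (ν : Eu n → Eu n) : Prop :=
  IsOpen Ω ∧ Bornology.IsBounded Ω ∧
  ∃ ρ : Eu n → ℝ, ContDiff ℝ 1 ρ ∧ Ω = {x | ρ x < 0} ∧
    ∀ x ∈ frontier Ω, gradient ρ x ≠ 0 ∧ ν x = ‖gradient ρ x‖⁻¹ • gradient ρ x

/-- `X` is the flow of `b`, and the origin is globally asymptotically stable. -/
def GAS (b : Eu n → Eu n) (X : ℝ → Eu n → Eu n) : Prop :=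
  (∀ x, X 0 x = x) ∧ (∀ x t, HasDerivAt (fun s => X s x) (b (X t x)) t) ∧
  (∀ x, Tendsto (fun t => X t x) atTop (nhds 0)) ∧
  (∀ ε > (0:ℝ), ∃ δ > (0:ℝ), ∀ x : Eu n, ‖x‖ < δ → ∀ t ≥ (0:ℝ), ‖X t x‖ < ε)

/-- `Ω_δ = {x ∈ Ω : dist(x,∂Ω) > δ}`. -/
def Omd (Ω : Set (Eu n)) (δ : ℝ) : Set (Eu n) := {x ∈ Ω | δ < infDist x (frontier Ω)}

/-- `Ω^Π_δ = {x ∈ Ω̄ : dist(x, ∂Ω \ Π) > δ}`. -/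
def OmPid (Ω Pset : Set (Eu n)) (δ : ℝ) : Set (Eu n) :=
  {x ∈ closure Ω | δ < infDist x (frontier Ω \ Pset)}

/-- the standing assumptions (B). -/
structure SettingB (n : ℕ) where
  Ω : Set (Eu n)
  ν : Eu n → Eu n
  g : Eu n → ℝ
  θ₀ : ℝ
  a : Eu n → ℝ → Matrix (Fin n) (Fin n) ℝ
  b : Eu n → Eu n
  b₀ : ℝ
  r₀ : ℝ
  θ₀_mem : θ₀ ∈ Set.Ioc (0 : ℝ) 1
  domain : IsBdC1With Ω ν
  zero_mem : (0 : Eu n) ∈ Ω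
  g_cont : ContinuousOn g (closure Ω)
  a_cont : ContinuousOn (fun p : Eu n × ℝ => a p.1 p.2) (closure Ω ×ˢ Set.univ)
  a_mem : ∀ x ∈ closure Ω, ∀ c : ℝ, memS θ₀ (a x c)
  b_lip : ∃ K : NNReal, LipschitzWith K b
  b_zero : b 0 = 0
  b_gas : ∃ X : ℝ → Eu n → Eu n, GAS b X
  b_inward : ∀ x ∈ frontier Ω, dotp (b x) (ν x) < 0
  b₀_pos : 0 < b₀
  r₀_pos : 0 < r₀
  ball_sub : closedBall (0 : Eu n) r₀ ⊆ Ω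
  b_coerc : ∀ x ∈ ball (0 : Eu n) r₀, dotp (b x) x ≤ -b₀ * ‖x‖ ^ 2

namespace SettingB

variable (S : SettingB n)

/-- the quasi-potential `V^c` associated with `(a(·,c), b)`. -/
def Vc (c : ℝ) : Eu n → ℝ := Vq (fun x => S.a x c) S.b S.Ω

/-- `M(c) = min_{∂Ω} V^c`. -/
def M (c : ℝ) : ℝ := sInf (S.Vc c '' frontier S.Ω)

/-- `G(c) = {g(x) : x ∈ argmin(V^c|∂Ω)}`. -/
def Gset (c : ℝ) : Set ℝ := S.g '' argminV (fun x => S.a x c) S.b S.Ω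

/-- `G⁺(c) = max G(c)`. -/
def Gp (c : ℝ) : ℝ := sSup (S.Gset c)

/-- `G⁻(c) = min G(c)`. -/
def Gm (c : ℝ) : ℝ := sInf (S.Gset c)

/-- `c₀ = g(0)`. -/
def c0 : ℝ := S.g 0

/-- `g_min = min_{Ω̄} g`. -/
def gmin : ℝ := sInf (S.g '' closure S.Ω)

/-- `g_max = max_{Ω̄} g`. -/
def gmax : ℝ := sSup (S.g '' closure S.Ω)

/-- the crossing value `c₁`. -/
def c1 : ℝ :=
  if S.c0 ≤ S.Gp S.c0 then sInf {c | S.c0 ≤ c ∧ S.Gm c ≤ c}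
  else sSup {c | c ≤ S.c0 ∧ c ≤ S.Gp c}

/-- the function `c̄ : (0,∞) → I_g`. -/
def cbar (l : ℝ) : ℝ :=
  if l < S.M S.c0 ∨ S.c1 = S.c0 then S.c0
  else if S.c0 < S.c1 then min S.c1 (sInf {c | c ∈ Set.Icc S.c0 S.c1 ∧ S.M c = l})
  else max S.c1 (sSup {c | c ∈ Set.Icc S.c1 S.c0 ∧ S.M c = l})

/-- assumption (FK13): `G⁺(c₀) = G⁻(c₀)`. -/
def FK13 : Prop := S.Gp S.c0 = S.Gm S.c0

/-- assumption (FK12). -/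
def FK12 : Prop :=
  ∀ δ₀ > (0:ℝ), ∃ δ ∈ Set.Ioc (0:ℝ) δ₀,
    (S.c1 ≤ S.c0 ∧ S.gmin < S.c1 → S.c1 - δ < S.Gm (S.c1 - δ)) ∧
    (S.c0 ≤ S.c1 ∧ S.c1 < S.gmax → S.Gp (S.c1 + δ) < S.c1 + δ)

/-- `u` is a classical (`C(Q̄) ∩ C^{2,1}(Q)`) solution of the quasi-linear equation (QL). -/
def SolvesQL (ε : ℝ) (u : Eu n → ℝ → ℝ) : Prop :=
  Classical21 u S.Ω ⊤ ∧ SolveL ε (fun x t => S.a x (u x t)) S.b u S.Ω ⊤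

/-- the boundary condition (BC): `u = g` on the parabolic boundary of `Q`. -/
def BC (u : Eu n → ℝ → ℝ) : Prop :=
  (∀ x ∈ closure S.Ω, u x 0 = S.g x) ∧ ∀ x ∈ frontier S.Ω, ∀ t > (0:ℝ), u x t = S.g x

end SettingB


/-! ### Linear algebra -/

/-- the operator of a matrix -/
abbrev cl (M : Matrix (Fin n) (Fin n) ℝ) : Eu n →L[ℝ] Eu n := Matrix.toEuclideanCLM (𝕜 := ℝ) M

lemma mquad_eq_dot (M : Matrix (Fin n) (Fin n) ℝ) (v : Eu n) :
    mquad M v = v.ofLp ⬝ᵥ M.mulVec v.ofLp := by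
  simp only [mquad, dotProduct, Matrix.mulVec, Finset.mul_sum]
  refine Finset.sum_congr rfl fun i _ => Finset.sum_congr rfl fun j _ => by ring

lemma mquad_eq_inner (M : Matrix (Fin n) (Fin n) ℝ) (v : Eu n) :
    mquad M v = inner ℝ v (cl M v) := by
  rw [mquad_eq_dot, Matrix.inner_toEuclideanCLM]

lemma mquad_add (M N : Matrix (Fin n) (Fin n) ℝ) (v : Eu n) :
    mquad (M + N) v = mquad M v + mquad N v := by
  simp [mquad_eq_inner, map_add, inner_add_right]

lemma mquad_sub (M N : Matrix (Fin n) (Fin n) ℝ) (v : Eu n) :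
    mquad (M - N) v = mquad M v - mquad N v := by
  simp [mquad_eq_inner, map_sub, inner_sub_right]

lemma mquad_smul (c : ℝ) (M : Matrix (Fin n) (Fin n) ℝ) (v : Eu n) :
    mquad (c • M) v = c * mquad M v := by
  simp [mquad_eq_inner, map_smul, inner_smul_right]

lemma mquad_one (v : Eu n) : mquad (1 : Matrix (Fin n) (Fin n) ℝ) v = ‖v‖ ^ 2 := by
  rw [mquad_eq_inner]; simp [cl, map_one]

/-- positive semidefinite (symmetric) matrices -/
def psd (M : Matrix (Fin n) (Fin n) ℝ) : Prop := M.IsSymm ∧ ∀ v : Eu n, 0 ≤ mquad M v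

lemma psd.posSemidef {M : Matrix (Fin n) (Fin n) ℝ} (h : psd M) : M.PosSemidef := by
  refine Matrix.PosSemidef.of_dotProduct_mulVec_nonneg ?_ fun x => ?_
  · rw [Matrix.IsHermitian, Matrix.conjTranspose_eq_transpose_of_trivial]; exact h.1
  · have := h.2 (WithLp.toLp 2 x)
    rw [mquad_eq_dot] at this
    simpa using this

lemma trMul_eq (A M : Matrix (Fin n) (Fin n) ℝ) : trMul A M = (A * M).trace := by
  simp [trMul, Matrix.trace, Matrix.mul_apply]

lemma trMul_add (A M N : Matrix (Fin n) (Fin n) ℝ) : trMul A (M + N) = trMul A M + trMul A N := by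
  simp [trMul_eq, Matrix.mul_add]

lemma trMul_sub (A M N : Matrix (Fin n) (Fin n) ℝ) : trMul A (M - N) = trMul A M - trMul A N := by
  simp [trMul_eq, Matrix.mul_sub]

lemma trMul_smul (c : ℝ) (A M : Matrix (Fin n) (Fin n) ℝ) : trMul A (c • M) = c * trMul A M := by
  simp [trMul_eq]

lemma trMul_one (A : Matrix (Fin n) (Fin n) ℝ) : trMul A 1 = A.trace := by
  simp [trMul_eq]

open scoped MatrixOrder ComplexOrder in
lemma trMul_psd {A M : Matrix (Fin n) (Fin n) ℝ} (hA : psd A) (hM : psd M) : 0 ≤ trMul A M := by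
  obtain ⟨B, hB⟩ := CStarAlgebra.nonneg_iff_eq_star_mul_self.mp hM.posSemidef.nonneg
  rw [Matrix.star_eq_conjTranspose] at hB
  rw [trMul_eq, hB, ← Matrix.mul_assoc, Matrix.trace_mul_comm, ← Matrix.mul_assoc]
  exact (hA.posSemidef.mul_mul_conjTranspose_same B).trace_nonneg

lemma memS.psd {θ : ℝ} (hθ : 0 < θ) {A : Matrix (Fin n) (Fin n) ℝ} (hA : memS θ A) : psd A :=
  ⟨hA.1, fun v => le_trans (by positivity) (hA.2 v).1⟩

lemma trMul_lower {θ : ℝ} {A M : Matrix (Fin n) (Fin n) ℝ} (hA : memS θ A) (hM : psd M) :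
    θ * M.trace ≤ trMul A M := by
  have h1 : _root_.psd (A - θ • (1 : Matrix (Fin n) (Fin n) ℝ)) := by
    refine ⟨?_, fun v => ?_⟩
    · have := hA.1
      simp [Matrix.IsSymm, Matrix.transpose_sub, this.eq]
    · rw [mquad_sub, mquad_smul, mquad_one]
      linarith [(hA.2 v).1]
  have h2 := trMul_psd h1 hM
  rw [trMul_eq, Matrix.sub_mul, Matrix.trace_sub] at h2
  rw [trMul_eq]
  simp at h2
  linarith

lemma mquad_single (A : Matrix (Fin n) (Fin n) ℝ) (i : Fin n) :
    mquad A (EuclideanSpace.single i 1) = A i i := by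
  rw [mquad]
  rw [Finset.sum_eq_single i, Finset.sum_eq_single i] <;> simp +contextual

lemma memS.trace_le {θ : ℝ} {A : Matrix (Fin n) (Fin n) ℝ} (hA : memS θ A) :
    A.trace ≤ n / θ := by
  have : ∀ i, A i i ≤ θ⁻¹ := fun i => by
    have := (hA.2 (EuclideanSpace.single i 1)).2
    rw [mquad_single] at this; simpa using this
  calc A.trace = ∑ i, A i i := rfl
    _ ≤ ∑ i : Fin n, θ⁻¹ := Finset.sum_le_sum fun i _ => this i
    _ = n / θ := by simp [div_eq_mul_inv]

lemma psd.det_le {M : Matrix (Fin n) (Fin n) ℝ} (h : psd M) : |M.det| ≤ M.trace ^ n := by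
  have hp := h.posSemidef
  have h0 := hp.eigenvalues_nonneg
  have ht : ∀ i, hp.1.eigenvalues i ≤ M.trace := fun i => by
    rw [hp.1.trace_eq_sum_eigenvalues]
    exact Finset.single_le_sum (f := fun i => hp.1.eigenvalues i) (fun j _ => h0 j) (Finset.mem_univ i)
  rw [hp.1.det_eq_prod_eigenvalues]
  simp only [RCLike.ofReal_real_eq_id, id]
  rw [abs_of_nonneg (Finset.prod_nonneg fun i _ => h0 i)]
  calc _ ≤ ∏ i : Fin n, M.trace := Finset.prod_le_prod (fun i _ => h0 i) fun i _ => ht i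
    _ = _ := by simp

lemma psd.trace_nonneg {M : Matrix (Fin n) (Fin n) ℝ} (h : psd M) : 0 ≤ M.trace :=
  h.posSemidef.trace_nonneg

/-- rank one matrix -/
def r1 (v : Eu n) : Matrix (Fin n) (Fin n) ℝ := Matrix.vecMulVec v.ofLp v.ofLp

lemma r1_symm (v : Eu n) : (r1 v).IsSymm := by
  ext i j; simp [r1, Matrix.vecMulVec_apply, mul_comm]

lemma cl_r1 (v z : Eu n) : cl (r1 v) z = (inner ℝ v z) • v := by
  ext i
  simp [r1, cl, Matrix.vecMulVec_mulVec, PiLp.inner_apply, dotProduct, mul_comm]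

lemma trMul_r1 (A : Matrix (Fin n) (Fin n) ℝ) (v : Eu n) : trMul A (r1 v) = mquad A v := by
  simp only [trMul, r1, mquad, Matrix.vecMulVec_apply]
  refine Finset.sum_congr rfl fun i _ => Finset.sum_congr rfl fun j _ => by ring

lemma cl_det (M : Matrix (Fin n) (Fin n) ℝ) : (cl M).det = M.det := by
  rw [ContinuousLinearMap.det, Matrix.coe_toEuclideanCLM_eq_toEuclideanLin,
    Matrix.toEuclideanLin_eq_toLin_orthonormal, LinearMap.det_toLin]

/-! ### Touching -/

/-- second order necessary conditions at a minimum -/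
lemma touch {g : Eu n → ℝ} {Q : Eu n → Eu n} {M : Matrix (Fin n) (Fin n) ℝ} {x : Eu n}
    (hg : ∀ᶠ y in 𝓝 x, HasFDerivAt g (innerSL ℝ (Q y)) y) (hQ : HasFDerivAt Q (cl M) x)
    (hmin : IsLocalMin g x) : Q x = 0 ∧ ∀ v, 0 ≤ mquad M v := by
  have h1 : Q x = 0 := by
    have := hmin.hasFDerivAt_eq_zero hg.self_of_nhds
    have h2 : (innerSL ℝ (Q x)) (Q x) = 0 := by rw [this]; rfl
    simpa using h2
  refine ⟨h1, fun v => ?_⟩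
  by_contra hneg
  push Not at hneg
  set l : ℝ → Eu n := fun s => x + s • v with hl
  have hld : ∀ s, HasDerivAt l v s := fun s => by
    have := ((hasDerivAt_id s).smul_const v).const_add x
    rw [one_smul] at this
    exact this
  have hl0 : l 0 = x := by simp [hl]
  have hlc : Tendsto l (𝓝 0) (𝓝 x) := by
    have := (hld 0).continuousAt.tendsto; rwa [hl0] at this
  have hd : ∀ᶠ s in 𝓝 (0:ℝ), HasDerivAt (g ∘ l) (inner ℝ (Q (l s)) v) s := by
    filter_upwards [hlc.eventually hg] with s hs
    simpa using hs.comp_hasDerivAt s (hld s)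
  have hde : deriv (g ∘ l) =ᶠ[𝓝 0] fun s => inner ℝ (Q (l s)) v :=
    hd.mono fun s hs => hs.deriv
  have hdd : HasDerivAt (fun s => inner ℝ (Q (l s)) v) (mquad M v) 0 := by
    have hq : HasDerivAt (fun s => Q (l s)) (cl M v) 0 := by
      have := (hl0.symm ▸ hQ : HasFDerivAt Q (cl M) (l 0)).comp_hasDerivAt (0:ℝ) (hld 0)
      exact this
    have := hq.inner ℝ (hasDerivAt_const (0:ℝ) v)
    rw [mquad_eq_inner, real_inner_comm]
    simpa using this
  have hdd' : deriv (deriv (g ∘ l)) 0 = mquad M v := by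
    rw [hde.deriv_eq]; exact hdd.deriv
  have hmax : IsLocalMax (g ∘ l) 0 := by
    apply isLocalMax_of_deriv_deriv_neg (by rw [hdd']; exact hneg)
    · rw [hde.self_of_nhds]; simp only [hl0, h1]; simp
    · exact hd.self_of_nhds.continuousAt
  have hmin' : IsLocalMin (g ∘ l) 0 := by
    have : IsLocalMin g (l 0) := by rw [hl0]; exact hmin
    exact this.comp_continuous (hld 0).continuousAt
  have hc : (g ∘ l) =ᶠ[𝓝 0] fun _ => (g ∘ l) 0 := by
    filter_upwards [hmax, hmin'] with s h1 h2 using le_antisymm h1 h2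
  have : deriv (g ∘ l) =ᶠ[𝓝 0] fun _ => 0 := by
    have := hc.deriv
    filter_upwards [this] with s hs
    rw [hs]; simp
  have h3 := this.deriv_eq
  rw [hdd'] at h3
  simp at h3
  linarith

lemma normsq_fderiv (y0 x : Eu n) :
    HasFDerivAt (fun y => ‖y - y0‖ ^ 2) (innerSL ℝ ((2:ℝ) • (x - y0))) x := by
  have := ((hasFDerivAt_id x).sub_const y0).norm_sq
  refine this.congr_fderiv ?_
  ext v
  simp [inner_smul_left]

lemma radial_grad {F : ℝ → ℝ} {f1 : ℝ} {y0 x : Eu n} (hF : HasDerivAt F f1 (‖x - y0‖ ^ 2)) :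
    HasFDerivAt (fun y => F (‖y - y0‖ ^ 2)) (innerSL ℝ ((2 * f1) • (x - y0))) x := by
  have := hF.comp_hasFDerivAt x (normsq_fderiv y0 x)
  refine this.congr_fderiv ?_
  ext v
  simp [inner_smul_left]; ring

/-- Hessian of a radial function -/
def radH (f1 f2 : ℝ) (z : Eu n) : Matrix (Fin n) (Fin n) ℝ :=
  (2 * f1) • (1 : Matrix (Fin n) (Fin n) ℝ) + (4 * f2) • r1 z

lemma radH_symm (f1 f2 : ℝ) (z : Eu n) : (radH f1 f2 z).IsSymm := by
  simp only [radH, Matrix.IsSymm, Matrix.transpose_add, Matrix.transpose_smul,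
    Matrix.transpose_one, (r1_symm z).eq]

lemma trMul_radH (A : Matrix (Fin n) (Fin n) ℝ) (f1 f2 : ℝ) (z : Eu n) :
    trMul A (radH f1 f2 z) = 2 * f1 * A.trace + 4 * f2 * mquad A z := by
  rw [radH, trMul_add, trMul_smul, trMul_smul, trMul_one, trMul_r1]

lemma radial_hess {F1 : ℝ → ℝ} {f2 : ℝ} {y0 x : Eu n} (hF : HasDerivAt F1 f2 (‖x - y0‖ ^ 2)) :
    HasFDerivAt (fun y => (2 * F1 (‖y - y0‖ ^ 2)) • (y - y0))
      (cl (radH (F1 (‖x - y0‖ ^ 2)) f2 (x - y0))) x := by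
  have h1 := (radial_grad hF).const_mul 2
  have h2 := h1.smul ((hasFDerivAt_id x).sub_const y0)
  refine h2.congr_fderiv ?_
  ext1 v
  simp only [radH, map_add, map_smul, add_apply,
    smul_apply, cl_r1]
  simp [cl, map_one, inner_smul_left, smul_smul]
  congr 1; rw [inner_sub_left]; ring

/-- `W` touched from below by a radial function. -/
lemma touch_radial {W : Eu n → ℝ} {q : Eu n → Eu n} {H : Matrix (Fin n) (Fin n) ℝ} {x y0 : Eu n}
    (hW : ∀ᶠ y in 𝓝 x, HasFDerivAt W (innerSL ℝ (q y)) y) (hq : HasFDerivAt q (cl H) x)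
    (hs : H.IsSymm) {F F1 : ℝ → ℝ} {f2 : ℝ}
    (hF : ∀ᶠ s in 𝓝 (‖x - y0‖ ^ 2), HasDerivAt F (F1 s) s)
    (hF1 : HasDerivAt F1 f2 (‖x - y0‖ ^ 2))
    (hmin : IsLocalMin (fun y => W y - F (‖y - y0‖ ^ 2)) x) :
    q x = (2 * F1 (‖x - y0‖ ^ 2)) • (x - y0) ∧
      psd (H - radH (F1 (‖x - y0‖ ^ 2)) f2 (x - y0)) := by
  have hc : Tendsto (fun y : Eu n => ‖y - y0‖ ^ 2) (𝓝 x) (𝓝 (‖x - y0‖ ^ 2)) :=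
    (normsq_fderiv y0 x).continuousAt.tendsto
  have h := touch (g := fun y => W y - F (‖y - y0‖ ^ 2))
    (Q := fun y => q y - (2 * F1 (‖y - y0‖ ^ 2)) • (y - y0))
    (M := H - radH (F1 (‖x - y0‖ ^ 2)) f2 (x - y0)) (x := x) ?_ ?_ hmin
  · refine ⟨sub_eq_zero.1 h.1, ?_, h.2⟩
    have := radH_symm (F1 (‖x - y0‖ ^ 2)) f2 (x - y0)
    rw [Matrix.IsSymm, Matrix.transpose_sub, hs.eq, this.eq]
  · filter_upwards [hW, hc.eventually hF] with y h1 h2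
    rw [map_sub]
    exact h1.sub (radial_grad h2)
  · simp only [cl, map_sub]
    exact hq.sub (radial_hess hF1)


/-! ### Solutions -/

/-- `w` solves some linear uniformly parabolic equation with drift bounded by `L` on `U`. -/
structure SolD (θ L : ℝ) (U : Set (Eu n × ℝ)) (w p : Eu n → ℝ → ℝ) (q : Eu n → ℝ → Eu n)
    (H : Eu n → ℝ → Matrix (Fin n) (Fin n) ℝ) : Prop where
  wc : ContinuousOn (fun z : Eu n × ℝ => w z.1 z.2) U
  pc : ContinuousOn (fun z : Eu n × ℝ => p z.1 z.2) U
  hc : ContinuousOn (fun z : Eu n × ℝ => H z.1 z.2) U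
  dt : ∀ x t, (x, t) ∈ U → HasDerivAt (w x) (p x t) t
  dx : ∀ x t, (x, t) ∈ U → HasFDerivAt (fun y => w y t) (innerSL ℝ (q x t)) x
  dxx : ∀ x t, (x, t) ∈ U → HasFDerivAt (fun y => q y t) (cl (H x t)) x
  sym : ∀ x t, (x, t) ∈ U → (H x t).IsSymm
  eq : ∀ x t, (x, t) ∈ U → ∃ A β, memS θ A ∧ ‖β‖ ≤ L ∧
    p x t = trMul A (H x t) + inner ℝ β (q x t)

lemma SolD.mono {θ L L' : ℝ} {U V : Set (Eu n × ℝ)} {w p : Eu n → ℝ → ℝ} {q : Eu n → ℝ → Eu n}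
    {H : Eu n → ℝ → Matrix (Fin n) (Fin n) ℝ} (h : SolD θ L U w p q H) (hV : V ⊆ U) (hL : L ≤ L') :
    SolD θ L' V w p q H where
  wc := h.wc.mono hV
  pc := h.pc.mono hV
  hc := h.hc.mono hV
  dt x t hx := h.dt x t (hV hx)
  dx x t hx := h.dx x t (hV hx)
  dxx x t hx := h.dxx x t (hV hx)
  sym x t hx := h.sym x t (hV hx)
  eq x t hx := by
    obtain ⟨A, β, h1, h2, h3⟩ := h.eq x t (hV hx)
    exact ⟨A, β, h1, h2.trans hL, h3⟩

lemma SolD.affine {θ L : ℝ} {U : Set (Eu n × ℝ)} {w p : Eu n → ℝ → ℝ} {q : Eu n → ℝ → Eu n}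
    {H : Eu n → ℝ → Matrix (Fin n) (Fin n) ℝ} (h : SolD θ L U w p q H) (c l : ℝ) :
    SolD θ L U (fun x t => c + l * w x t) (fun x t => l * p x t) (fun x t => l • q x t)
      (fun x t => l • H x t) where
  wc := continuousOn_const.add (continuousOn_const.mul h.wc)
  pc := continuousOn_const.mul h.pc
  hc := h.hc.const_smul l
  dt x t hx := ((h.dt x t hx).const_mul l).const_add c
  dx x t hx := by
    refine (((h.dx x t hx).const_mul l).const_add c).congr_fderiv ?_
    simp
  dxx x t hx := by
    refine ((h.dxx x t hx).const_smul l).congr_fderiv ?_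
    simp
  sym x t hx := by
    rw [Matrix.IsSymm, Matrix.transpose_smul, (h.sym x t hx).eq]
  eq x t hx := by
    obtain ⟨A, β, h1, h2, h3⟩ := h.eq x t hx
    refine ⟨A, β, h1, h2, ?_⟩
    rw [h3, trMul_smul, inner_smul_right]; ring

lemma SolD.scale {θ L : ℝ} {U : Set (Eu n × ℝ)} {w p : Eu n → ℝ → ℝ} {q : Eu n → ℝ → Eu n}
    {H : Eu n → ℝ → Matrix (Fin n) (Fin n) ℝ} (h : SolD θ L U w p q H) (x0 : Eu n) (t0 : ℝ)
    {r : ℝ} (hr : 0 < r) :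
    SolD θ (r * L) {z | (x0 + r • z.1, t0 + r ^ 2 * z.2) ∈ U}
      (fun x t => w (x0 + r • x) (t0 + r ^ 2 * t))
      (fun x t => r ^ 2 * p (x0 + r • x) (t0 + r ^ 2 * t))
      (fun x t => r • q (x0 + r • x) (t0 + r ^ 2 * t))
      (fun x t => r ^ 2 • H (x0 + r • x) (t0 + r ^ 2 * t)) := by
  have hm : Continuous (fun z : Eu n × ℝ => (x0 + r • z.1, t0 + r ^ 2 * z.2)) := by fun_prop
  have hmt : MapsTo (fun z : Eu n × ℝ => (x0 + r • z.1, t0 + r ^ 2 * z.2))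
    {z | (x0 + r • z.1, t0 + r ^ 2 * z.2) ∈ U} U := fun z hz => hz
  have hlx : ∀ x : Eu n, HasFDerivAt (fun y : Eu n => x0 + r • y) (r • ContinuousLinearMap.id ℝ (Eu n)) x :=
    fun x => ((hasFDerivAt_id x).const_smul r).const_add x0
  refine ⟨h.wc.comp hm.continuousOn hmt, continuousOn_const.mul (h.pc.comp hm.continuousOn hmt),
    (h.hc.comp hm.continuousOn hmt).const_smul (r ^ 2), ?_, ?_, ?_, ?_, ?_⟩
  · intro x t hx
    have h1 := h.dt _ _ hx
    have h2 : HasDerivAt (fun s : ℝ => t0 + r ^ 2 * s) (r ^ 2) t := by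
      simpa using ((hasDerivAt_id t).const_mul (r ^ 2)).const_add t0
    have := HasDerivAt.comp t h1 h2
    rw [mul_comm] at this
    exact this
  · intro x t hx
    have := (h.dx _ _ hx).comp x (hlx x)
    refine this.congr_fderiv ?_
    ext v; simp [inner_smul_left]
  · intro x t hx
    have := ((h.dxx _ _ hx).comp x (hlx x)).const_smul r
    refine this.congr_fderiv ?_
    ext1 v; simp [smul_smul, pow_two]
  · intro x t hx
    rw [Matrix.IsSymm, Matrix.transpose_smul, (h.sym _ _ hx).eq]
  · intro x t hx
    obtain ⟨A, β, h1, h2, h3⟩ := h.eq _ _ hx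
    refine ⟨A, r • β, h1, ?_, ?_⟩
    · rw [norm_smul, Real.norm_of_nonneg hr.le]; gcongr
    · rw [h3, trMul_smul, inner_smul_right, inner_smul_left]; simp; ring

/-- solutions on closed cylinders -/
def Sol (θ L : ℝ) (c : Eu n) (R a b : ℝ) (w : Eu n → ℝ → ℝ) : Prop :=
  ∃ p q H, SolD θ L (closedBall c R ×ˢ Icc a b) w p q H

lemma Sol.mono {θ L L' : ℝ} {c c' : Eu n} {R R' a a' b b' : ℝ} {w : Eu n → ℝ → ℝ}
    (h : Sol θ L c R a b w) (hL : L ≤ L') (hc : dist c' c + R' ≤ R) (ha : a ≤ a') (hb : b' ≤ b) :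
    Sol θ L' c' R' a' b' w := by
  obtain ⟨p, q, H, h⟩ := h
  refine ⟨p, q, H, h.mono (prod_mono ?_ (Icc_subset_Icc ha hb)) hL⟩
  exact closedBall_subset_closedBall' (by linarith)

lemma Sol.affine {θ L : ℝ} {c : Eu n} {R a b : ℝ} {w : Eu n → ℝ → ℝ}
    (h : Sol θ L c R a b w) (k l : ℝ) : Sol θ L c R a b (fun x t => k + l * w x t) := by
  obtain ⟨p, q, H, h⟩ := h
  exact ⟨_, _, _, h.affine k l⟩

lemma Sol.scale {θ L : ℝ} {x0 : Eu n} {R a b t0 r : ℝ} {w : Eu n → ℝ → ℝ} (hr : 0 < r)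
    (h : Sol θ L x0 (r * R) (t0 + r ^ 2 * a) (t0 + r ^ 2 * b) w) :
    Sol θ (r * L) 0 R a b (fun x t => w (x0 + r • x) (t0 + r ^ 2 * t)) := by
  obtain ⟨p, q, H, h⟩ := h
  refine ⟨_, _, _, (h.scale x0 t0 hr).mono ?_ le_rfl⟩
  rintro ⟨x, t⟩ ⟨hx, ht⟩
  simp only [mem_closedBall, dist_zero_right, mem_Icc] at hx ht
  refine ⟨?_, ?_, ?_⟩
  · simp only [mem_closedBall, dist_self_add_left, norm_smul, Real.norm_of_nonneg hr.le]
    gcongr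
  · have := ht.1; simp only; gcongr
  · have := ht.2; simp only; gcongr


/-! ### From measure to pointwise positivity at one time -/

lemma psd.smul {M : Matrix (Fin n) (Fin n) ℝ} (h : psd M) {c : ℝ} (hc : 0 ≤ c) : psd (c • M) := by
  refine ⟨by rw [Matrix.IsSymm, Matrix.transpose_smul, h.1.eq], fun v => ?_⟩
  rw [mquad_smul]; exact mul_nonneg hc (h.2 v)

lemma contactA {θ L : ℝ} {w p : Eu n → ℝ → ℝ} {q : Eu n → ℝ → Eu n}
    {H : Eu n → ℝ → Matrix (Fin n) (Fin n) ℝ} (hL : 0 ≤ L)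
    (hs : SolD θ L (closedBall 0 1 ×ˢ Icc 0 1) w p q H)
    (hw : ∀ x ∈ closedBall (0 : Eu n) 1, ∀ t ∈ Icc (0:ℝ) 1, 0 ≤ w x t)
    {t : ℝ} (ht : t ∈ Icc (0:ℝ) 1) {x y : Eu n} (hy : ‖y‖ ≤ 1 / 4)
    (hx : x ∈ closedBall (0 : Eu n) 1)
    (hmin : ∀ z ∈ closedBall (0 : Eu n) 1, w x t + 2 * ‖x - y‖ ^ 2 ≤ w z t + 2 * ‖z - y‖ ^ 2)
    (hlt : w x t + 2 * ‖x - y‖ ^ 2 < 1) :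
    x + (1 / 4 : ℝ) • q x t = y ∧ psd (1 + (1 / 4 : ℝ) • H x t) ∧
      4 * θ * (1 + (1 / 4 : ℝ) • H x t).trace - (4 * n / θ + 5 * L) ≤ p x t := by
  have hx1 : ‖x‖ ≤ 1 := by simpa using hx
  have hxlt : ‖x‖ < 1 := by
    by_contra hcon
    have h1 : ‖x‖ - ‖y‖ ≤ ‖x - y‖ := norm_sub_norm_le x y
    have h2 : 3 / 4 ≤ ‖x - y‖ := by linarith
    have := hw x hx t ht
    nlinarith
  have hnb : closedBall (0 : Eu n) 1 ∈ 𝓝 x :=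
    Filter.mem_of_superset (isOpen_ball.mem_nhds (by simpa using hxlt : x ∈ ball (0 : Eu n) 1))
      ball_subset_closedBall
  have hT := touch_radial (W := fun y => w y t) (q := fun y => q y t) (H := H x t) (x := x) (y0 := y)
    (F := fun s => -2 * s) (F1 := fun _ => -2) (f2 := 0)
    (by filter_upwards [hnb] with z hz using hs.dx z t ⟨hz, ht⟩) (hs.dxx x t ⟨hx, ht⟩)
    (hs.sym x t ⟨hx, ht⟩)
    (Eventually.of_forall fun s => by simpa using (hasDerivAt_id s).const_mul (-2 : ℝ))
    (hasDerivAt_const _ _)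
    (by
      filter_upwards [hnb] with z hz
      have := hmin z hz
      linarith)
  obtain ⟨h1, h2⟩ := hT
  have hN : (1 + (1 / 4 : ℝ) • H x t) = (1 / 4 : ℝ) • (H x t - radH (-2) 0 (x - y)) := by
    simp only [radH]
    rw [smul_sub, smul_add, smul_smul, smul_smul]; norm_num [add_comm]
  have hNp : psd (1 + (1 / 4 : ℝ) • H x t) := by rw [hN]; exact h2.smul (by norm_num)
  have h1' : q x t = (-4 : ℝ) • (x - y) := by rw [h1]; norm_num
  refine ⟨?_, hNp, ?_⟩
  · rw [h1', smul_smul]; norm_num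
  · obtain ⟨A, β, hA, hβ, he⟩ := hs.eq x t ⟨hx, ht⟩
    have h3 := trMul_lower hA hNp
    rw [trMul_add, trMul_smul, trMul_one] at h3
    have h4 := hA.trace_le
    have h5 : |inner ℝ β (q x t)| ≤ ‖β‖ * ‖q x t‖ := abs_real_inner_le_norm _ _
    have h6 : ‖q x t‖ ≤ 5 := by
      rw [h1', norm_smul]
      have : ‖x - y‖ ≤ ‖x‖ + ‖y‖ := norm_sub_le x y
      norm_num; linarith
    have h7 : ‖β‖ * ‖q x t‖ ≤ L * 5 := by gcongr
    have h8 := (abs_le.1 h5).1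
    rw [he]
    have h9 : 4 * (n:ℝ) / θ = 4 * (n / θ) := by ring
    rw [h9]
    linarith

lemma lemA_aux (θ L : ℝ) (hθ : 0 < θ) (hL : 0 ≤ L) {w p : Eu n → ℝ → ℝ} {q : Eu n → ℝ → Eu n}
    {H : Eu n → ℝ → Matrix (Fin n) (Fin n) ℝ}
    (hs : SolD θ L (closedBall 0 1 ×ˢ Icc 0 1) w p q H)
    (t : ℝ) (ht : t ∈ Icc (0:ℝ) 1) (X : ℝ) (hX : 0 ≤ X) :
    ∃ E : Set (Eu n), MeasurableSet E ∧
      MeasureTheory.volume E ≤ ENNReal.ofReal (X ^ n) *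
        MeasureTheory.volume {x ∈ closedBall (0 : Eu n) 1 | w x t ≤ 1} ∧
      ∀ x ∈ closedBall (0 : Eu n) 1, w x t ≤ 1 → psd (1 + (1 / 4 : ℝ) • H x t) →
        (1 + (1 / 4 : ℝ) • H x t).trace ≤ X → x + (1 / 4 : ℝ) • q x t ∈ E := by
  set F : Set (Eu n) := {x ∈ closedBall (0 : Eu n) 1 | w x t ≤ 1 ∧
    |(1 + (1 / 4 : ℝ) • H x t).det| ≤ X ^ n} with hF
  have hemb : ContinuousOn (fun x : Eu n => (x, t)) (closedBall 0 1) := by fun_prop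
  have hmt : MapsTo (fun x : Eu n => (x, t)) (closedBall 0 1) (closedBall 0 1 ×ˢ Icc 0 1) :=
    fun x hx => ⟨hx, ht⟩
  have hwc : ContinuousOn (fun x => w x t) (closedBall (0 : Eu n) 1) := hs.wc.comp hemb hmt
  have hHc : ContinuousOn (fun x => H x t) (closedBall (0 : Eu n) 1) := hs.hc.comp hemb hmt
  have hdc : ContinuousOn (fun x => |(1 + (1 / 4 : ℝ) • H x t).det|) (closedBall (0 : Eu n) 1) := by
    have : Continuous fun M : Matrix (Fin n) (Fin n) ℝ => |(1 + (1 / 4 : ℝ) • M).det| := by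
      exact (Continuous.matrix_det (by fun_prop)).abs
    exact this.comp_continuousOn hHc
  have hFc : IsClosed F := by
    have h1 := hwc.preimage_isClosed_of_isClosed isClosed_closedBall (isClosed_Iic (a := (1:ℝ)))
    have h2 := hdc.preimage_isClosed_of_isClosed isClosed_closedBall (isClosed_Iic (a := X ^ n))
    convert h1.inter h2 using 1
    ext x; simp only [hF, mem_setOf_eq, mem_inter_iff, mem_preimage, mem_Iic]; tauto
  have hFk : IsCompact F := (isCompact_closedBall (0 : Eu n) 1).of_isClosed_subset hFc fun x hx => hx.1
  set T : Eu n → Eu n := fun x => x + (1 / 4 : ℝ) • q x t with hT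
  have hTd : ∀ x ∈ closedBall (0 : Eu n) 1, HasFDerivAt T (cl (1 + (1 / 4 : ℝ) • H x t)) x := by
    intro x hx
    refine ((hasFDerivAt_id x).add ((hs.dxx x t ⟨hx, ht⟩).const_smul (1 / 4 : ℝ))).congr_fderiv ?_
    simp only [cl, map_add, map_one, map_smul]; rfl
  refine ⟨T '' F, ?_, ?_, ?_⟩
  · exact (hFk.image_of_continuousOn fun x hx =>
      (hTd x hx.1).continuousAt.continuousWithinAt).measurableSet
  · refine (MeasureTheory.addHaar_image_le_lintegral_abs_det_fderiv MeasureTheory.volume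
      hFc.measurableSet (fun x hx => (hTd x hx.1).hasFDerivWithinAt)).trans ?_
    refine (MeasureTheory.setLIntegral_mono (g := fun _ => ENNReal.ofReal (X ^ n)) (by fun_prop)
      (fun x hx => ?_)).trans ?_
    · rw [cl_det]; exact ENNReal.ofReal_le_ofReal hx.2.2
    · rw [MeasureTheory.setLIntegral_const]
      gcongr
      exact fun x hx => ⟨hx.1, hx.2.1⟩
  · intro x hx hw hp htr
    refine ⟨x, ⟨hx, hw, hp.det_le.trans ?_⟩, rfl⟩
    exact pow_le_pow_left₀ hp.trace_nonneg htr n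


lemma int_lemma {f k : ℝ → ℝ} {Y V C a h : ℝ} (hf : Continuous f) (hf0 : ∀ t, 0 ≤ f t)
    (hY : ∀ t ∈ Icc (0:ℝ) 1, f t ≤ Y) (hk : MeasureTheory.Integrable k) (hk0 : ∀ t, 0 ≤ k t)
    (hkI : ∫ t, k t ≤ V) (hC : 0 ≤ C) (h0 : 0 < h) (h1 : h ≤ 1 / 2) (ha : 0 ≤ a)
    (hstep : ∀ t ∈ Icc h 1, f t - f (t - h) + h * a ≤ h * (C * k t)) : a / 2 ≤ Y + C * V := by
  have hfi : ∀ u v, IntervalIntegrable f MeasureTheory.volume u v := fun u v => hf.intervalIntegrable u v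
  have hki : IntervalIntegrable k MeasureTheory.volume h 1 := hk.intervalIntegrable
  have hfs : Continuous fun t => f (t - h) := by fun_prop
  have key : ∫ t in h..1, (f t - f (t - h) + h * a) ≤ ∫ t in h..1, h * (C * k t) := by
    refine intervalIntegral.integral_mono_on (by linarith) ?_ ?_ hstep
    · exact Continuous.intervalIntegrable (by fun_prop) _ _
    · exact (hki.const_mul C).const_mul h
  have hL : ∫ t in h..1, (f t - f (t - h) + h * a) =
      (∫ t in (1-h)..1, f t) - (∫ t in 0..h, f t) + (1 - h) * (h * a) := by
    rw [intervalIntegral.integral_add (by exact Continuous.intervalIntegrable (by fun_prop) _ _)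
      (by simp), intervalIntegral.integral_sub (hfi _ _) (hfs.intervalIntegrable _ _),
      intervalIntegral.integral_comp_sub_right (fun t => f t) h, intervalIntegral.integral_const]
    have e1 := intervalIntegral.integral_add_adjacent_intervals (hfi 0 h) (hfi h 1)
    have e2 := intervalIntegral.integral_add_adjacent_intervals (hfi 0 (1-h)) (hfi (1-h) 1)
    simp only [sub_self, smul_eq_mul]
    linarith
  have h2 : 0 ≤ ∫ t in (1-h)..1, f t := intervalIntegral.integral_nonneg (by linarith) fun t _ => hf0 t
  have h3 : ∫ t in 0..h, f t ≤ h * Y := by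
    have := intervalIntegral.integral_mono_on (a := 0) (b := h) h0.le (hfi 0 h)
      (by simp : IntervalIntegrable (fun _ : ℝ => Y) MeasureTheory.volume 0 h)
      (fun t ht => hY t ⟨ht.1, by linarith [ht.2]⟩)
    simpa using this
  have h4 : ∫ t in h..1, h * (C * k t) ≤ h * (C * V) := by
    rw [intervalIntegral.integral_const_mul, intervalIntegral.integral_const_mul]
    gcongr
    rw [intervalIntegral.integral_of_le (by linarith)]
    exact (MeasureTheory.setIntegral_le_integral hk (Eventually.of_forall hk0)).trans hkI
  have h5 : (1 / 2) * (h * a) ≤ (1 - h) * (h * a) := by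
    have : 0 ≤ h * a := by positivity
    nlinarith
  rw [hL] at key
  have : h * (a / 2) ≤ h * (Y + C * V) := by linarith
  exact le_of_mul_le_mul_left this h0

set_option maxHeartbeats 1000000 in
lemma lemA (n : ℕ) (θ L : ℝ) (hθ : 0 < θ) (hL : 0 ≤ L) : ∃ μ > (0:ℝ), ∀ w : Eu n → ℝ → ℝ,
    Sol θ L 0 1 0 1 w → (∀ x ∈ closedBall (0 : Eu n) 1, ∀ t ∈ Icc (0:ℝ) 1, 0 ≤ w x t) →
    MeasureTheory.volume {z : Eu n × ℝ | z ∈ closedBall (0 : Eu n) 1 ×ˢ Icc (0:ℝ) 1 ∧ w z.1 z.2 ≤ 1}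
      ≤ ENNReal.ofReal μ →
    ∃ t₁ ∈ Icc (0:ℝ) 1, ∀ x ∈ closedBall (0 : Eu n) (1 / 8), 1 / 2 ≤ w x t₁ := by
  set vY : ℝ := MeasureTheory.volume.real (closedBall (0 : Eu n) (1 / 4)) with hvY
  set v8 : ℝ := MeasureTheory.volume.real (closedBall (0 : Eu n) (1 / 8)) with hv8
  have hv8p : 0 < v8 := by
    rw [hv8, MeasureTheory.measureReal_def]
    exact ENNReal.toReal_pos (Metric.measure_closedBall_pos MeasureTheory.volume _ (by norm_num)).ne'
      MeasureTheory.measure_closedBall_lt_top.ne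
  have hvYp : 0 < vY := by
    rw [hvY, MeasureTheory.measureReal_def]
    exact ENNReal.toReal_pos (Metric.measure_closedBall_pos MeasureTheory.volume _ (by norm_num)).ne'
      MeasureTheory.measure_closedBall_lt_top.ne
  set σ : ℝ := v8 / 8 with hσ
  have hσp : 0 < σ := by positivity
  set R : ℝ := 4 * vY / σ with hR
  have hRp : 0 < R := by positivity
  set P : ℝ := 4 * n / θ + 5 * L with hP
  have hP0 : 0 ≤ P := by positivity
  set X : ℝ := (R + P) / (4 * θ) with hX
  have hX0 : 0 ≤ X := by positivity
  set C : ℝ := (R + P) * X ^ n with hC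
  have hC0 : 0 ≤ C := by positivity
  refine ⟨vY / (4 * (C + 1)), by positivity, ?_⟩
  rintro w ⟨p, q, H, hs⟩ hw hvol
  have hKc : IsCompact (closedBall (0 : Eu n) 1 ×ˢ Icc (0:ℝ) 1) :=
    (isCompact_closedBall _ _).prod isCompact_Icc
  obtain ⟨W, hWc, hW⟩ : ∃ W : Eu n × ℝ → ℝ, Continuous W ∧
      ∀ z ∈ closedBall (0 : Eu n) 1 ×ˢ Icc (0:ℝ) 1, W z = w z.1 z.2 := by
    obtain ⟨g, hg⟩ := ContinuousMap.exists_restrict_eq hKc.isClosed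
      ⟨_, continuousOn_iff_continuous_domRestrict.1 hs.wc⟩
    refine ⟨g, g.continuous, fun z hz => ?_⟩
    have := congrArg (fun f => f ⟨z, hz⟩) hg
    simpa using this
  set S : Set (Eu n × ℝ) :=
    {z : Eu n × ℝ | z ∈ closedBall (0 : Eu n) 1 ×ˢ Icc (0:ℝ) 1 ∧ w z.1 z.2 ≤ 1} with hS
  have hSm : MeasurableSet S := by
    have := (hs.wc.preimage_isClosed_of_isClosed hKc.isClosed (isClosed_Iic (a := (1:ℝ))))
    exact this.measurableSet
  set φ : Eu n → ℝ → ℝ := fun y t =>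
    max 0 (1 - sInf ((fun x => W (x, t) + 2 * ‖x - y‖ ^ 2) '' closedBall (0 : Eu n) 1)) with hφ
  have hφc : Continuous (fun z : ℝ × Eu n => φ z.2 z.1) := by
    refine continuous_const.max (continuous_const.sub ?_)
    refine IsCompact.continuous_sInf (f := fun z : ℝ × Eu n => fun x : Eu n =>
      W (x, z.1) + 2 * ‖x - z.2‖ ^ 2) (isCompact_closedBall _ _) ?_
    simp only [Function.HasUncurry.uncurry, id]
    fun_prop
  have hφ0 : ∀ y t, 0 ≤ φ y t := fun y t => le_max_left _ _
  have hcont : ∀ y t, ∃ x ∈ closedBall (0 : Eu n) 1,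
      (∀ z ∈ closedBall (0 : Eu n) 1, W (x, t) + 2 * ‖x - y‖ ^ 2 ≤ W (z, t) + 2 * ‖z - y‖ ^ 2) ∧
      φ y t = max 0 (1 - (W (x, t) + 2 * ‖x - y‖ ^ 2)) := by
    intro y t
    obtain ⟨x, hx, hxm, hxm2⟩ := (isCompact_closedBall (0 : Eu n) 1).exists_sInf_image_eq_and_le
      ⟨0, by simp⟩ (f := fun x => W (x, t) + 2 * ‖x - y‖ ^ 2) (by fun_prop)
    exact ⟨x, hx, hxm2, by simp only [hφ]; rw [hxm]⟩
  have hφlow : ∀ y t, ∀ z ∈ closedBall (0 : Eu n) 1, 1 - (W (z, t) + 2 * ‖z - y‖ ^ 2) ≤ φ y t := by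
    intro y t z hz
    obtain ⟨x, hx, h1, h2⟩ := hcont y t
    rw [h2]
    exact le_max_of_le_right (by linarith [h1 z hz])
  have hφ1 : ∀ y, ∀ t ∈ Icc (0:ℝ) 1, φ y t ≤ 1 := by
    intro y t ht
    obtain ⟨x, hx, h1, h2⟩ := hcont y t
    rw [h2]
    refine max_le (by norm_num) ?_
    have := hw x hx t ht
    rw [hW (x, t) ⟨hx, ht⟩]
    have : 0 ≤ ‖x - y‖ ^ 2 := by positivity
    simp only; linarith
  set f : ℝ → ℝ := fun t => ∫ y in closedBall (0 : Eu n) (1 / 4), φ y t with hf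
  have hfc : Continuous f :=
    continuous_parametric_integral_of_continuous (f := fun t y => φ y t) hφc
      (isCompact_closedBall (0 : Eu n) (1 / 4))
  have hφi : ∀ t, MeasureTheory.IntegrableOn (fun y => φ y t) (closedBall (0 : Eu n) (1 / 4)) := fun t =>
    ContinuousOn.integrableOn_compact (isCompact_closedBall _ _)
      (Continuous.continuousOn (hφc.comp (by fun_prop : Continuous fun y : Eu n => (t, y))))
  have hf0 : ∀ t, 0 ≤ f t := fun t => MeasureTheory.integral_nonneg fun y => hφ0 y t
  have hfY : ∀ t ∈ Icc (0:ℝ) 1, f t ≤ vY := by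
    intro t ht
    have := MeasureTheory.setIntegral_mono (hφi t)
      (MeasureTheory.integrableOn_const (C := (1:ℝ)) MeasureTheory.measure_closedBall_lt_top.ne)
      (fun y => hφ1 y t ht)
    simpa [hvY, hf] using this
  set k : ℝ → ℝ := fun t => (MeasureTheory.volume ((fun x : Eu n => (x, t)) ⁻¹' S)).toReal with hk
  have hkl : ∫⁻ t, MeasureTheory.volume ((fun x : Eu n => (x, t)) ⁻¹' S) = MeasureTheory.volume S := by
    rw [MeasureTheory.Measure.volume_eq_prod, MeasureTheory.Measure.prod_apply_symm hSm]
  have hkm : Measurable fun t => MeasureTheory.volume ((fun x : Eu n => (x, t)) ⁻¹' S) :=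
    measurable_measure_prodMk_right hSm
  have hSfin : MeasureTheory.volume S ≠ ⊤ := (hvol.trans_lt ENNReal.ofReal_lt_top).ne
  have hki : MeasureTheory.Integrable k :=
    MeasureTheory.integrable_toReal_of_lintegral_ne_top hkm.aemeasurable (by rw [hkl]; exact hSfin)
  have hslfin : ∀ t, MeasureTheory.volume ((fun x : Eu n => (x, t)) ⁻¹' S) ≠ ⊤ := fun t =>
    ne_top_of_le_ne_top (MeasureTheory.measure_closedBall_lt_top (x := (0 : Eu n)) (r := 1)).ne
      (MeasureTheory.measure_mono fun x hx => hx.1.1)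
  have hkI : ∫ t, k t ≤ vY / (4 * (C + 1)) := by
    rw [MeasureTheory.integral_toReal hkm.aemeasurable
      (Eventually.of_forall fun t => (hslfin t).lt_top), hkl]
    exact ENNReal.toReal_le_of_le_ofReal (by positivity) hvol
  obtain ⟨d, hd, hpu⟩ := Metric.uniformContinuousOn_iff.1
    (hKc.uniformContinuousOn_of_continuous hs.pc) 1 one_pos
  set h : ℝ := min (1 / 2) (d / 2) with hh
  have hhp : 0 < h := by positivity
  have hstep : ∀ t ∈ Icc h 1, f t - f (t - h) ≤ h * (vY - R * f t + C * k t) := by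
    intro t ht
    have ht1 : t ∈ Icc (0:ℝ) 1 := ⟨hhp.le.trans ht.1, ht.2⟩
    have ht2 : t - h ∈ Icc (0:ℝ) 1 := ⟨by linarith [ht.1], by linarith [ht.2]⟩
    obtain ⟨E, hEm, hEv, hE⟩ := lemA_aux θ L hθ hL hs t ht1 X hX0
    have hpt : ∀ y ∈ closedBall (0 : Eu n) (1 / 4), φ y t - φ y (t - h) ≤
        h * (1 - R * φ y t + E.indicator (fun _ => R + P) y) := by
      intro y hy
      have hy' : ‖y‖ ≤ 1 / 4 := by simpa using hy
      have hin0 : 0 ≤ E.indicator (fun _ => R + P) y := indicator_nonneg (fun _ _ => by positivity) y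
      obtain ⟨x, hx, h1, h2⟩ := hcont y t
      by_cases hlt : W (x, t) + 2 * ‖x - y‖ ^ 2 < 1
      · have h2' : φ y t = 1 - (W (x, t) + 2 * ‖x - y‖ ^ 2) := by
          rw [h2]; exact max_eq_right (by linarith)
        have h3 := hφlow y (t - h) x hx
        have e1 : W (x, t) = w x t := hW (x, t) ⟨hx, ht1⟩
        have e2 : W (x, t - h) = w x (t - h) := hW (x, t - h) ⟨hx, ht2⟩
        obtain ⟨c1, c2, c3⟩ := contactA hL hs hw ht1 hy' hx (fun z hz => by
          have := h1 z hz
          rwa [e1, hW (z, t) ⟨hz, ht1⟩] at this) (by rwa [← e1])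
        obtain ⟨ξ, hξ, hmv⟩ := exists_hasDerivAt_eq_slope (w x) (p x) (a := t - h) (b := t)
          (by linarith) (fun s hs' => (hs.dt x s ⟨hx, ht2.1.trans hs'.1, hs'.2.trans ht.2⟩).continuousAt.continuousWithinAt)
          (fun s hs' => hs.dt x s ⟨hx, ht2.1.trans hs'.1.le, hs'.2.le.trans ht.2⟩)
        have hpx : p x t - 1 < p x ξ := by
          have := hpu (x, t) ⟨hx, ht1⟩ (x, ξ) ⟨hx, ht2.1.trans hξ.1.le, hξ.2.le.trans ht.2⟩ (by
            rw [Prod.dist_eq, dist_self, Real.dist_eq, max_eq_right (abs_nonneg _), abs_lt]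
            have : h ≤ d / 2 := min_le_right _ _
            constructor <;> linarith [hξ.1, hξ.2])
          rw [Real.dist_eq] at this
          have := (abs_lt.1 this).2
          simp only at this
          linarith
        have hmv' : w x t - w x (t - h) = h * p x ξ := by
          rw [hmv, sub_sub_cancel]; field_simp
        have hdec : φ y t - φ y (t - h) ≤ - (h * (p x t - 1)) := by
          have : h * (p x t - 1) ≤ h * p x ξ := by gcongr
          rw [h2', ]; linarith
        have hφ1' := hφ1 y t ht1
        by_cases hpR : R ≤ p x t
        · have : R * φ y t ≤ p x t := by nlinarith [hφ0 y t]
          refine hdec.trans ?_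
          rw [← mul_neg]
          gcongr
          linarith
        · push Not at hpR
          have hyE : y ∈ E := by
            rw [← c1]
            refine hE x hx (by rw [← e1]; nlinarith [sq_nonneg ‖x - y‖]) c2 ?_
            rw [hX, le_div_iff₀ (by positivity)]
            linarith
          have htr := c2.trace_nonneg
          have hpP : - P ≤ p x t := by
            have : 0 ≤ 4 * θ * (1 + (1 / 4 : ℝ) • H x t).trace := by positivity
            linarith
          rw [indicator_of_mem hyE]
          have : R * φ y t ≤ R := by nlinarith
          refine hdec.trans ?_
          rw [← mul_neg]
          gcongr
          linarith
      · have hz : φ y t = 0 := by rw [h2]; exact max_eq_left (by linarith)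
        rw [hz]
        have : 0 ≤ h * (1 - R * 0 + E.indicator (fun _ => R + P) y) := by
          apply mul_nonneg hhp.le; linarith
        linarith [hφ0 y (t - h)]
    have hEi : MeasureTheory.IntegrableOn (E.indicator (fun _ => R + P)) (closedBall (0 : Eu n) (1 / 4)) :=
      (MeasureTheory.integrableOn_const (C := R + P) MeasureTheory.measure_closedBall_lt_top.ne).indicator hEm
    have hone : MeasureTheory.IntegrableOn (fun _ : Eu n => (1:ℝ)) (closedBall (0 : Eu n) (1 / 4)) :=
      MeasureTheory.integrableOn_const MeasureTheory.measure_closedBall_lt_top.ne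
    have hRi : MeasureTheory.IntegrableOn (fun y : Eu n => 1 - R * φ y t) (closedBall (0 : Eu n) (1 / 4)) :=
      hone.sub ((hφi t).const_mul R)
    have hRi2 : MeasureTheory.IntegrableOn
        (fun y : Eu n => h * (1 - R * φ y t + E.indicator (fun _ => R + P) y))
        (closedBall (0 : Eu n) (1 / 4)) := (hRi.add hEi).const_mul h
    have hLi : MeasureTheory.IntegrableOn (fun y : Eu n => φ y t - φ y (t - h))
        (closedBall (0 : Eu n) (1 / 4)) := (hφi t).sub (hφi (t - h))
    have hmono := MeasureTheory.setIntegral_mono_on hLi hRi2 measurableSet_closedBall hpt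
    have e1 : ∫ y in closedBall (0 : Eu n) (1 / 4), (φ y t - φ y (t - h)) = f t - f (t - h) :=
      MeasureTheory.integral_sub (hφi t) (hφi (t - h))
    have e2 : ∫ y in closedBall (0 : Eu n) (1 / 4), h * (1 - R * φ y t + E.indicator (fun _ => R + P) y)
        = h * (vY - R * f t + ∫ y in closedBall (0 : Eu n) (1 / 4), E.indicator (fun _ => R + P) y) := by
      rw [MeasureTheory.integral_const_mul, MeasureTheory.integral_add hRi hEi,
        MeasureTheory.integral_sub hone ((hφi t).const_mul R), MeasureTheory.integral_const_mul]
      simp [hvY, hf]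
    have e3 : ∫ y in closedBall (0 : Eu n) (1 / 4), E.indicator (fun _ => R + P) y ≤ C * k t := by
      rw [MeasureTheory.setIntegral_indicator hEm, MeasureTheory.setIntegral_const, smul_eq_mul]
      have hvE : MeasureTheory.volume.real (closedBall (0 : Eu n) (1 / 4) ∩ E) ≤ X ^ n * k t := by
        have hsl : MeasureTheory.volume {x ∈ closedBall (0 : Eu n) 1 | w x t ≤ 1} ≤
            MeasureTheory.volume ((fun x : Eu n => (x, t)) ⁻¹' S) :=
          MeasureTheory.measure_mono fun x hx => ⟨⟨hx.1, ht1⟩, hx.2⟩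
        have := (MeasureTheory.measure_mono (inter_subset_right (s := closedBall (0 : Eu n) (1 / 4)))).trans
          (hEv.trans (mul_le_mul_right hsl (ENNReal.ofReal (X ^ n))))
        rw [MeasureTheory.measureReal_def]
        refine (ENNReal.toReal_mono (ENNReal.mul_ne_top ENNReal.ofReal_ne_top (hslfin t)) this).trans ?_
        rw [ENNReal.toReal_mul, ENNReal.toReal_ofReal (by positivity)]
      calc _ ≤ X ^ n * k t * (R + P) := by gcongr
        _ = C * k t := by rw [hC]; ring
    rw [e2] at hmono
    have : h * (vY - R * f t + ∫ y in closedBall (0 : Eu n) (1 / 4), E.indicator (fun _ => R + P) y)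
      ≤ h * (vY - R * f t + C * k t) := by gcongr
    calc f t - f (t - h) = _ := e1.symm
      _ ≤ _ := hmono
      _ ≤ _ := this
  obtain ⟨t₁, ht₁, hft⟩ : ∃ t₁ ∈ Icc (0:ℝ) 1, f t₁ ≤ σ := by
    by_contra hcon
    push Not at hcon
    have := int_lemma (a := 3 * vY) hfc hf0 hfY hki (fun t => ENNReal.toReal_nonneg) hkI hC0 hhp
      (min_le_left _ _) (by positivity) (fun t ht => by
        have h1 := hstep t ht
        have h2 := hcon t ⟨hhp.le.trans ht.1, ht.2⟩
        have h3 : 4 * vY ≤ R * f t := by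
          calc 4 * vY = R * σ := by rw [hR]; field_simp
            _ ≤ R * f t := by gcongr
        have : h * (vY - R * f t + C * k t) ≤ h * (vY - 4 * vY + C * k t) := by gcongr
        linarith)
    have h2 : C * (vY / (4 * (C + 1))) ≤ vY / 4 := by
      rw [mul_div_assoc', div_le_div_iff₀ (by positivity) (by norm_num)]
      nlinarith
    linarith
  refine ⟨t₁, ht₁, fun x hx => ?_⟩
  by_contra hcon
  push Not at hcon
  have hx' : ‖x‖ ≤ 1 / 8 := by simpa using hx
  have hx1 : x ∈ closedBall (0 : Eu n) 1 := by simp; linarith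
  have hsubs : closedBall x (1 / 8) ⊆ closedBall (0 : Eu n) (1 / 4) := by
    apply closedBall_subset_closedBall'
    rw [dist_zero_right]; linarith
  have hlow : ∀ y ∈ closedBall x (1 / 8), 1 / 4 ≤ φ y t₁ := by
    intro y hy
    refine le_trans ?_ (hφlow y t₁ x hx1)
    rw [hW (x, t₁) ⟨hx1, ht₁⟩]
    have : ‖x - y‖ ≤ 1 / 8 := by rw [← dist_eq_norm, dist_comm]; exact hy
    have h0 := norm_nonneg (x - y)
    simp only
    nlinarith
  have h1 : ∫ y in closedBall x (1 / 8), φ y t₁ ≤ f t₁ :=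
    MeasureTheory.setIntegral_mono_set (hφi t₁) (Eventually.of_forall fun y => hφ0 y t₁)
      (LE.le.eventuallyLE hsubs)
  have h2 : v8 / 4 ≤ ∫ y in closedBall x (1 / 8), φ y t₁ := by
    have := MeasureTheory.setIntegral_mono_on
      (MeasureTheory.integrableOn_const (C := (1 / 4:ℝ)) MeasureTheory.measure_closedBall_lt_top.ne)
      ((hφi t₁).mono_set hsubs) measurableSet_closedBall hlow
    rw [MeasureTheory.setIntegral_const] at this
    have e : MeasureTheory.volume.real (closedBall x (1 / 8)) = v8 := by
      rw [hv8, MeasureTheory.measureReal_def, MeasureTheory.measureReal_def,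
        MeasureTheory.Measure.addHaar_closedBall_center]
    rw [e, smul_eq_mul] at this
    linarith
  linarith


/-! ### The spreading barrier -/

lemma deriv_nonpos_of_left {f : ℝ → ℝ} {d t : ℝ} (h : HasDerivAt f d t)
    (hm : ∀ᶠ s in 𝓝[<] t, f t ≤ f s) : d ≤ 0 := by
  have h1 := (hasDerivAt_iff_tendsto_slope.1 h).mono_left
    (nhdsWithin_mono t (fun s hs => ne_of_lt hs) : 𝓝[<] t ≤ 𝓝[≠] t)
  refine le_of_tendsto h1 ?_
  filter_upwards [hm, self_mem_nhdsWithin] with s hs hst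
  rw [slope_def_field]
  exact div_nonpos_of_nonneg_of_nonpos (by linarith) (by have : s < t := hst; linarith)

set_option maxHeartbeats 1000000 in
lemma lemB (n : ℕ) (θ L : ℝ) (hθ : 0 < θ) (hL : 0 ≤ L) : ∃ c > (0:ℝ), ∀ (w : Eu n → ℝ → ℝ) (s t₁ : ℝ),
    s ∈ Icc (2:ℝ) 6 → Sol θ L 0 8 0 s w →
    (∀ x ∈ closedBall (0 : Eu n) 8, ∀ t ∈ Icc (0:ℝ) s, 0 ≤ w x t) →
    t₁ ∈ Icc (0:ℝ) 1 → (∀ x ∈ closedBall (0 : Eu n) (1 / 8), 1 / 2 ≤ w x t₁) →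
    ∀ y ∈ closedBall (0 : Eu n) 2, c ≤ w y s := by
  set c0 : ℝ := 8 * θ + 4 * (n / θ) + 28 * L + 16 with hc0
  have hc0p : 0 < c0 := by positivity
  set K : ℝ := 2 * c0 ^ 2 / θ with hK
  have hKp : 0 < K := by positivity
  set σ : ℝ := Real.exp (-(6 * K)) with hσ
  have hσp : 0 < σ := Real.exp_pos _
  refine ⟨σ, hσp, ?_⟩
  rintro w s t₁ hs ⟨p, q, H, hS⟩ hw ht₁ hw₁ y hy
  set ρ : ℝ → ℝ := fun t => 1 / 64 + 8 * (t - t₁) with hρ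
  set E : ℝ → ℝ := fun t => Real.exp (-(K * (t - t₁))) with hE
  set D : Set (Eu n × ℝ) := {z | z.2 ∈ Icc t₁ s ∧ ‖z.1‖ ^ 2 ≤ ρ z.2} with hD
  have hDsub : ∀ z ∈ D, ‖z.1‖ < 7 := by
    rintro ⟨x, t⟩ ⟨h1, h2⟩
    simp only [hρ] at h1 h2 ⊢
    have := h1.2; have := hs.2; have := ht₁.1
    by_contra hcon
    push Not at hcon
    nlinarith
  have hDin : ∀ z ∈ D, z ∈ closedBall (0 : Eu n) 8 ×ˢ Icc 0 s := by
    intro z hz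
    refine ⟨?_, ht₁.1.trans hz.1.1, hz.1.2⟩
    have := hDsub z hz
    simp; linarith
  have hDc : IsCompact D := by
    refine ((isCompact_closedBall (0 : Eu n) 8).prod (isCompact_Icc (a := (0:ℝ)) (b := s))).of_isClosed_subset
      ?_ hDin
    have h1 : IsClosed {z : Eu n × ℝ | z.2 ∈ Icc t₁ s} := isClosed_Icc.preimage continuous_snd
    have h2 : IsClosed {z : Eu n × ℝ | ‖z.1‖ ^ 2 ≤ ρ z.2} := by
      refine isClosed_le (by fun_prop) ?_
      simp only [hρ]; fun_prop
    exact h1.inter h2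
  set g : Eu n × ℝ → ℝ := fun z => w z.1 z.2 - E z.2 * (ρ z.2 - ‖z.1‖ ^ 2) ^ 2 + σ * (z.2 - t₁) with hg
  have hgc : ContinuousOn g D := by
    refine ((hS.wc.mono hDin).sub (Continuous.continuousOn ?_)).add (Continuous.continuousOn ?_)
    · simp only [hE, hρ]; fun_prop
    · fun_prop
  have ht₁s : t₁ ≤ s := by linarith [ht₁.2, hs.1]
  have hyn : ‖y‖ ≤ 2 := by simpa using hy
  have hyD : (y, s) ∈ D := by
    refine ⟨⟨ht₁s, le_rfl⟩, ?_⟩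
    simp only [hρ]
    have := norm_nonneg y
    nlinarith [ht₁.2, hs.1]
  obtain ⟨⟨x, t⟩, hz, hmin⟩ := hDc.exists_isMinOn ⟨_, hyD⟩ hgc
  have hgz : 0 ≤ g (x, t) := by
    by_contra hneg
    push Not at hneg
    have hin := hDin _ hz
    have hx7 := hDsub _ hz
    simp only at hx7
    have hwn := hw x hin.1 t hin.2
    have hEp : 0 < E t := Real.exp_pos _
    have htt : t₁ ≤ t := hz.1.1
    have h1 : t₁ < t := by
      rcases eq_or_lt_of_le htt with h | h
      · exfalso
        subst h
        have hz2 : ‖x‖ ^ 2 ≤ ρ t₁ := hz.2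
        have hρ1 : ρ t₁ = 1 / 64 := by simp [hρ]
        have hE1 : E t₁ = 1 := by simp [hE]
        have hx8 : ‖x‖ ≤ 1 / 8 := by
          rw [hρ1] at hz2
          by_contra hcon; push Not at hcon; nlinarith
        have h2 := hw₁ x (by simpa using hx8)
        have h3 : (1 / 64 - ‖x‖ ^ 2) ^ 2 ≤ 1 / 2 := by
          have h0 := sq_nonneg ‖x‖
          rw [hρ1] at hz2
          nlinarith
        simp only [hg, hρ1, hE1, sub_self] at hneg
        linarith
      · exact h
    have h2 : ‖x‖ ^ 2 < ρ t := by
      rcases eq_or_lt_of_le (show ‖x‖ ^ 2 ≤ ρ t from hz.2) with h | h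
      · exfalso
        simp only [hg, h, sub_self] at hneg
        have : 0 ≤ σ * (t - t₁) := mul_nonneg hσp.le (by linarith)
        nlinarith
      · exact h
    set S : ℝ := ρ t - ‖x‖ ^ 2 with hSdef
    have hSp : 0 < S := by linarith
    have hts : t ≤ s := hz.1.2
    have hnb : ∀ᶠ y in 𝓝 x, ‖y‖ ^ 2 < ρ t := by
      have : Continuous fun y : Eu n => ‖y‖ ^ 2 := by fun_prop
      exact this.continuousAt.eventually_lt continuousAt_const h2
    have hT := touch_radial (W := fun y => w y t) (q := fun y => q y t) (H := H x t) (x := x) (y0 := 0)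
      (F := fun s => E t * (ρ t - s) ^ 2) (F1 := fun s => - 2 * E t * (ρ t - s)) (f2 := 2 * E t)
      (by filter_upwards [hnb] with z hz' using hS.dx z t (hDin (z, t) ⟨hz.1, hz'.le⟩))
      (hS.dxx x t hin) (hS.sym x t hin)
      (Eventually.of_forall fun s => by
        have := (((hasDerivAt_id s).const_sub (ρ t)).pow 2).const_mul (E t)
        refine this.congr_deriv ?_
        simp; ring)
      (by
        have := ((hasDerivAt_id (‖x - 0‖ ^ 2)).const_sub (ρ t)).const_mul (-2 * E t)
        refine this.congr_deriv ?_
        ring)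
      (by
        filter_upwards [hnb] with z hz'
        have : g (x, t) ≤ g (z, t) := hmin (show (z, t) ∈ D from ⟨hz.1, hz'.le⟩)
        simp only [hg] at this
        simp only [sub_zero]
        linarith)
    obtain ⟨hq, hpsd⟩ := hT
    simp only [sub_zero] at hq hpsd
    rw [← hSdef] at hq hpsd
    have hdt : HasDerivAt (fun τ => g (x, τ)) (p x t - (E t * (-K) * S ^ 2 + E t * (2 * S * 8)) + σ) t := by
      have hρd : HasDerivAt (fun τ => ρ τ - ‖x‖ ^ 2) 8 t := by
        have := ((((hasDerivAt_id t).sub_const t₁).const_mul 8).const_add (1 / 64)).sub_const (‖x‖ ^ 2)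
        simpa [hρ] using this
      have hEd : HasDerivAt E (E t * (-K)) t := by
        have := (((hasDerivAt_id t).sub_const t₁).const_mul K).neg.exp
        refine this.congr_deriv ?_
        simp [hE]
      have h5 := ((hS.dt x t hin).sub (hEd.mul (hρd.pow 2))).add
        (((hasDerivAt_id t).sub_const t₁).const_mul σ)
      refine h5.congr_deriv ?_
      simp [hSdef]
    have htle : p x t - (E t * (-K) * S ^ 2 + E t * (2 * S * 8)) + σ ≤ 0 := by
      refine deriv_nonpos_of_left hdt ?_
      have hc1 : ∀ᶠ τ in 𝓝 t, ‖x‖ ^ 2 < ρ τ := by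
        have : Continuous ρ := by simp only [hρ]; fun_prop
        exact continuousAt_const.eventually_lt this.continuousAt h2
      have hc2 : ∀ᶠ τ in 𝓝 t, t₁ < τ := lt_mem_nhds h1
      filter_upwards [nhdsWithin_le_nhds hc1, nhdsWithin_le_nhds hc2, self_mem_nhdsWithin] with τ a1 a2 a3
      have a3' : τ < t := a3
      exact hmin (show (x, τ) ∈ D from ⟨⟨a2.le, by linarith⟩, a1.le⟩)
    obtain ⟨A, β, hA, hβ, he⟩ := hS.eq x t hin
    have e1 := trMul_psd (hA.psd hθ) hpsd
    rw [trMul_sub, trMul_radH] at e1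
    have e2 := hA.trace_le
    have e3 := (hA.2 x).1
    have e4 : |inner ℝ β (q x t)| ≤ ‖β‖ * ‖q x t‖ := abs_real_inner_le_norm _ _
    have e5 : ‖q x t‖ ≤ 28 * (E t * S) := by
      rw [hq, norm_smul]
      have : ‖2 * (-2 * E t * S)‖ = 4 * (E t * S) := by
        rw [Real.norm_eq_abs, show 2 * (-2 * E t * S) = -(4 * (E t * S)) by ring, abs_neg,
          abs_of_nonneg (by positivity)]
      rw [this]
      have : 0 < E t * S := by positivity
      nlinarith
    have e6 : ‖β‖ * ‖q x t‖ ≤ L * (28 * (E t * S)) := by gcongr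
    have e7 := (abs_le.1 e4).1
    have hρt : 1 / 64 ≤ ρ t := by simp only [hρ]; linarith
    have e8 : 0 ≤ E t * (8 * θ * (ρ t - S) - S * (4 * (n / θ) + 28 * L + 16) + K * S ^ 2) := by
      refine mul_nonneg hEp.le ?_
      have hKθ : K * θ = 2 * c0 ^ 2 := by rw [hK]; field_simp
      have : 0 ≤ θ / 8 - S * c0 + K * S ^ 2 := by
        have : 0 ≤ θ * (θ / 8 - S * c0 + K * S ^ 2) := by
          have : θ * (θ / 8 - S * c0 + K * S ^ 2) = θ ^ 2 / 8 - S * c0 * θ + (K * θ) * S ^ 2 := by ring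
          rw [this, hKθ]
          nlinarith [sq_nonneg (θ - 4 * c0 * S)]
        exact nonneg_of_mul_nonneg_right this hθ
      have h8 : 8 * θ * (1 / 64) ≤ 8 * θ * ρ t := by gcongr
      rw [hc0] at this
      linarith
    have e9 : ‖x‖ ^ 2 = ρ t - S := by rw [hSdef]; ring
    rw [e9] at e3
    have f1 : E t * S * A.trace ≤ E t * S * (n / θ) := by gcongr
    have f2 : E t * (θ * (ρ t - S)) ≤ E t * mquad A x := by gcongr
    nlinarith
  have hfin : g (x, t) ≤ g (y, s) := hmin hyD
  have hgy : 0 ≤ g (y, s) := hgz.trans hfin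
  simp only [hg] at hgy
  have hS4 : 4 ≤ ρ s - ‖y‖ ^ 2 := by
    simp only [hρ]
    have := norm_nonneg y
    nlinarith [ht₁.2, hs.1]
  have hEs : σ ≤ E s := by
    simp only [hσ, hE]
    apply Real.exp_le_exp.2
    have : K * (s - t₁) ≤ K * 6 := by gcongr; linarith [hs.2, ht₁.1]
    linarith
  have h16 : 16 * σ ≤ E s * (ρ s - ‖y‖ ^ 2) ^ 2 := by
    have : 16 ≤ (ρ s - ‖y‖ ^ 2) ^ 2 := by nlinarith
    nlinarith
  have h6 : σ * (s - t₁) ≤ σ * 6 := by gcongr; linarith [hs.2, ht₁.1]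
  linarith


lemma volscale (x : Eu n) (t : ℝ) {r : ℝ} (hr : 0 < r) (S : Set (Eu n × ℝ)) :
    MeasureTheory.volume {z : Eu n × ℝ | (x + r • z.1, t + r ^ 2 * z.2) ∈ S} =
      ENNReal.ofReal ((r ^ (n + 2))⁻¹) * MeasureTheory.volume S := by
  set f : (Eu n × ℝ) →ₗ[ℝ] (Eu n × ℝ) :=
    LinearMap.prodMap (r • LinearMap.id) ((r ^ 2) • LinearMap.id) with hf
  have hdet : LinearMap.det f = r ^ (n + 2) := by
    rw [hf, LinearMap.det_prodMap, LinearMap.det_smul, LinearMap.det_smul]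
    simp [pow_add]
  have h1 : {z : Eu n × ℝ | (x + r • z.1, t + r ^ 2 * z.2) ∈ S} =
      f ⁻¹' ((fun z => (x, t) + z) ⁻¹' S) := by
    ext z; simp [hf]
  have hI : (MeasureTheory.volume : MeasureTheory.Measure (Eu n × ℝ)).IsAddHaarMeasure := by
    rw [MeasureTheory.Measure.volume_eq_prod]; infer_instance
  rw [h1, MeasureTheory.Measure.addHaar_preimage_linearMap _ (by rw [hdet]; positivity), hdet,
    MeasureTheory.measure_preimage_add, abs_of_nonneg (by positivity)]

/-- Closed forward cylinder. -/
def cyl (x : Eu n) (t r : ℝ) : Set (Eu n × ℝ) := closedBall x r ×ˢ Icc t (t + r ^ 2)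

/-- `w > λ` on most of the cylinder -/
def Full (μ : ℝ) (w : Eu n → ℝ → ℝ) (lam : ℝ) (x : Eu n) (t r : ℝ) : Prop :=
  MeasureTheory.volume {z : Eu n × ℝ | z ∈ cyl x t r ∧ w z.1 z.2 ≤ lam} ≤
    ENNReal.ofReal (μ * r ^ (n + 2))

/-- The conclusion of the growth lemma. -/
def Growth (n : ℕ) (θ μ c : ℝ) : Prop := ∀ (w : Eu n → ℝ → ℝ) (x : Eu n) (t r s lam : ℝ),
    0 < r → r ≤ 4 → 0 < lam → s ∈ Icc (t + 2 * r ^ 2) (t + 6 * r ^ 2) →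
    Sol θ 1 x (8 * r) t s w →
    (∀ y ∈ closedBall x (8 * r), ∀ τ ∈ Icc t s, 0 ≤ w y τ) →
    Full μ w lam x t r → ∀ y ∈ closedBall x (2 * r), c * lam < w y s

lemma lemG (n : ℕ) (θ : ℝ) (hθ : 0 < θ) : ∃ μ > (0:ℝ), ∃ c ∈ Ioo (0:ℝ) 1, Growth n θ μ c := by
  obtain ⟨μ, hμ, hA⟩ := lemA n θ 4 hθ (by norm_num)
  obtain ⟨c, hc, hB⟩ := lemB n θ 4 hθ (by norm_num)
  refine ⟨μ, hμ, min c 1 / 2, ⟨by positivity, ?_⟩, ?_⟩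
  · have : min c 1 ≤ 1 := min_le_right _ _
    linarith
  intro w x t r s lam hr hr4 hlam hs hsol hpos hfull y hy
  have hr2 : 0 < r ^ 2 := by positivity
  set S : ℝ := (s - t) / r ^ 2 with hS
  have hSe : t + r ^ 2 * S = s := by rw [hS]; field_simp; ring
  have hS2 : S ∈ Icc (2:ℝ) 6 := by
    constructor
    · rw [hS, le_div_iff₀ hr2]; linarith [hs.1]
    · rw [hS, div_le_iff₀ hr2]; linarith [hs.2]
  have hsol' : Sol θ 1 x (r * 8) (t + r ^ 2 * 0) (t + r ^ 2 * S) w := by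
    rw [hSe, mul_zero, add_zero, mul_comm]; exact hsol
  set W : Eu n → ℝ → ℝ := fun y τ => 0 + lam⁻¹ * w (x + r • y) (t + r ^ 2 * τ) with hW
  have hWs : Sol θ 4 0 8 0 S W :=
    ((hsol'.scale hr).affine 0 lam⁻¹).mono (by linarith) (by simp) le_rfl le_rfl
  have hWp : ∀ y ∈ closedBall (0 : Eu n) 8, ∀ τ ∈ Icc (0:ℝ) S, 0 ≤ W y τ := by
    intro y hy τ hτ
    simp only [hW, zero_add]
    refine mul_nonneg (by positivity) (hpos _ ?_ _ ⟨?_, ?_⟩)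
    · simp only [mem_closedBall, dist_zero_right] at hy
      simp only [mem_closedBall, dist_self_add_left, norm_smul, Real.norm_of_nonneg hr.le]
      nlinarith
    · have := mul_nonneg hr2.le hτ.1; linarith
    · rw [← hSe]; have := hτ.2; gcongr
  have hvol : MeasureTheory.volume {z : Eu n × ℝ | z ∈ closedBall (0 : Eu n) 1 ×ˢ Icc (0:ℝ) 1 ∧ W z.1 z.2 ≤ 1}
      ≤ ENNReal.ofReal μ := by
    have hsub : {z : Eu n × ℝ | z ∈ closedBall (0 : Eu n) 1 ×ˢ Icc (0:ℝ) 1 ∧ W z.1 z.2 ≤ 1} ⊆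
        {z : Eu n × ℝ | (x + r • z.1, t + r ^ 2 * z.2) ∈
          {z : Eu n × ℝ | z ∈ cyl x t r ∧ w z.1 z.2 ≤ lam}} := by
      rintro ⟨y, τ⟩ ⟨⟨h1, h2⟩, h3⟩
      simp only [mem_closedBall, dist_zero_right] at h1 h2
      refine ⟨⟨?_, ?_, ?_⟩, ?_⟩
      · simp only [mem_closedBall, dist_self_add_left, norm_smul, Real.norm_of_nonneg hr.le]
        nlinarith
      · have := mul_nonneg hr2.le h2.1; simp only; linarith
      · have := mul_le_mul_of_nonneg_left h2.2 hr2.le; simp only; linarith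
      · simp only [hW, zero_add] at h3
        rw [inv_mul_le_iff₀ hlam, mul_one] at h3
        exact h3
    refine (MeasureTheory.measure_mono hsub).trans ?_
    rw [volscale x t hr]
    calc _ ≤ ENNReal.ofReal ((r ^ (n + 2))⁻¹) * ENNReal.ofReal (μ * r ^ (n + 2)) := by
          gcongr; exact hfull
      _ = ENNReal.ofReal μ := by
          rw [← ENNReal.ofReal_mul (by positivity)]
          congr 1; field_simp
  have hS1 : (1:ℝ) ≤ S := by linarith [hS2.1]
  obtain ⟨t₁, ht₁, h1⟩ := hA W (hWs.mono le_rfl (by simp) le_rfl hS1)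
    (fun y hy τ hτ => hWp y (closedBall_subset_closedBall (by norm_num) hy) τ ⟨hτ.1, hτ.2.trans hS1⟩) hvol
  have h2 := hB W S t₁ hS2 hWs hWp ht₁ h1 (r⁻¹ • (y - x)) (by
    simp only [mem_closedBall, dist_zero_right, norm_smul, norm_inv, Real.norm_of_nonneg hr.le]
    rw [inv_mul_le_iff₀ hr, ← dist_eq_norm]
    simpa [mul_comm] using hy)
  simp only [hW, zero_add, hSe, smul_smul, mul_inv_cancel₀ hr.ne', one_smul, add_sub_cancel] at h2
  have h3 : c * lam ≤ w y s := by
    rw [inv_mul_eq_div, le_div_iff₀ hlam] at h2; exact h2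
  have h4 : min c 1 / 2 < c := by
    have : min c 1 ≤ c := min_le_left _ _
    linarith
  exact (mul_lt_mul_of_pos_right h4 hlam).trans_le h3


/-! ### Chains of cylinders -/

/-- nonnegative solutions with drift bounded by one -/
def SolP (θ : ℝ) (x : Eu n) (R a b : ℝ) (w : Eu n → ℝ → ℝ) : Prop :=
  Sol θ 1 x R a b w ∧ ∀ y ∈ closedBall x R, ∀ τ ∈ Icc a b, 0 ≤ w y τ

lemma SolP.mono {θ : ℝ} {c c' : Eu n} {R R' a a' b b' : ℝ} {w : Eu n → ℝ → ℝ}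
    (h : SolP θ c R a b w) (hc : dist c' c + R' ≤ R) (ha : a ≤ a') (hb : b' ≤ b) :
    SolP θ c' R' a' b' w :=
  ⟨h.1.mono le_rfl hc ha hb, fun y hy τ hτ =>
    h.2 y (closedBall_subset_closedBall' (by linarith) hy) τ ⟨ha.trans hτ.1, hτ.2.trans hb⟩⟩

lemma SolP.scale {θ : ℝ} {x0 : Eu n} {R a b t0 r : ℝ} {w : Eu n → ℝ → ℝ} (hr : 0 < r) (hr1 : r ≤ 1)
    (h : SolP θ x0 (r * R) (t0 + r ^ 2 * a) (t0 + r ^ 2 * b) w) :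
    SolP θ 0 R a b (fun x t => w (x0 + r • x) (t0 + r ^ 2 * t)) := by
  refine ⟨(h.1.scale hr).mono (by linarith) (by simp) le_rfl le_rfl, fun y hy τ hτ => h.2 _ ?_ _ ⟨?_, ?_⟩⟩
  · simp only [mem_closedBall, dist_zero_right] at hy
    simp only [mem_closedBall, dist_self_add_left, norm_smul, Real.norm_of_nonneg hr.le]
    gcongr
  · have := hτ.1; gcongr
  · have := hτ.2; gcongr

lemma SolP.smul {θ : ℝ} {x0 : Eu n} {R a b : ℝ} {w : Eu n → ℝ → ℝ}
    (h : SolP θ x0 R a b w) {k : ℝ} (hk : 0 ≤ k) : SolP θ x0 R a b (fun x t => k * w x t) := by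
  refine ⟨?_, fun y hy τ hτ => mul_nonneg hk (h.2 y hy τ hτ)⟩
  have := h.1.affine 0 k
  simpa using this

lemma full_of_gt {μ : ℝ} {w : Eu n → ℝ → ℝ} {lam : ℝ} {x : Eu n} {t r : ℝ}
    (h : ∀ y ∈ closedBall x r, ∀ s ∈ Icc t (t + r ^ 2), lam < w y s) : Full μ w lam x t r := by
  rw [Full]
  have : {z : Eu n × ℝ | z ∈ cyl x t r ∧ w z.1 z.2 ≤ lam} = ∅ := by
    ext z
    simp only [mem_setOf_eq, mem_empty_iff_false, iff_false]
    rintro ⟨h1, h2⟩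
    exact absurd (h z.1 h1.1 z.2 h1.2) (not_lt.2 h2)
  rw [this]; simp

lemma gstep {θ μ c : ℝ} (hG : Growth n θ μ c) {w : Eu n → ℝ → ℝ} {x : Eu n} {t r T lam : ℝ}
    (hr : 0 < r) (hr4 : r ≤ 4) (hlam : 0 < lam) (hsol : SolP θ x (8 * r) t T w)
    (hT : t + 6 * r ^ 2 ≤ T) (hf : Full μ w lam x t r) :
    ∀ y ∈ closedBall x (2 * r), ∀ s ∈ Icc (t + 2 * r ^ 2) (t + 2 * r ^ 2 + (2 * r) ^ 2),
      c * lam < w y s := by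
  intro y hy s hs
  have h6 : s ≤ t + 6 * r ^ 2 := by nlinarith [hs.2]
  have hsol' : SolP θ x (8 * r) t s w := hsol.mono (by simp) le_rfl (h6.trans hT)
  exact hG w x t r s lam hr hr4 hlam ⟨hs.1, h6⟩ hsol'.1 hsol'.2 hf y hy

lemma chain {θ μ c : ℝ} (hG : Growth n θ μ c) (hc : c ∈ Ioo (0:ℝ) 1) (w : Eu n → ℝ → ℝ) (x : Eu n)
    (s : ℝ) (j : ℕ) : ∀ (t r lam : ℝ), 0 < r → 2 ^ j * r ≤ 4 → 0 < lam →
    s ∈ Icc (t + (2 / 3) * (4 ^ (j + 1) - 1) * r ^ 2)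
      (t + (2 / 3) * (4 ^ (j + 1) - 1) * r ^ 2 + 4 ^ (j + 1) * r ^ 2) →
    SolP θ x (8 * (2 ^ j * r)) t s w → Full μ w lam x t r →
    ∀ y ∈ closedBall x (2 ^ (j + 1) * r), c ^ (j + 1) * lam < w y s := by
  induction j with
  | zero =>
    intro t r lam hr hr4 hlam hs hsol hf y hy
    simp only [zero_add, pow_one, pow_zero, one_mul] at *
    exact hG w x t r s lam hr hr4 hlam ⟨by linarith [hs.1], by linarith [hs.2]⟩ hsol.1 hsol.2 hf y hy
  | succ j ih =>
    intro t r lam hr hr4 hlam hs hsol hf y hy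
    have h2j : (1:ℝ) ≤ 2 ^ j := one_le_pow₀ (by norm_num)
    have h4j : (1:ℝ) ≤ 4 ^ j := one_le_pow₀ (by norm_num)
    have e2 : (2:ℝ) ^ (j + 1) = 2 * 2 ^ j := by ring
    have e4 : (4:ℝ) ^ (j + 1 + 1) = 16 * 4 ^ j := by ring
    have e4' : (4:ℝ) ^ (j + 1) = 4 * 4 ^ j := by ring
    have hr2 : 0 < r ^ 2 := by positivity
    have h42 : r ^ 2 ≤ 4 ^ j * r ^ 2 := by nlinarith
    have h22 : r ≤ 2 ^ j * r := by nlinarith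
    have h1 := gstep hG hr (by rw [e2] at hr4; nlinarith) hlam
      (hsol.mono (c' := x) (R' := 8 * r) (a' := t) (b' := s) (by rw [e2]; simp; nlinarith) le_rfl le_rfl)
      (by have := hs.1; rw [e4] at this; nlinarith) hf
    have h2 := ih (t + 2 * r ^ 2) (2 * r) (c * lam) (by positivity) (by rw [e2] at hr4; linarith)
      (mul_pos hc.1 hlam)
      (by
        have a1 := hs.1
        have a2 := hs.2
        rw [e4] at a1 a2
        rw [e4']
        constructor <;> nlinarith)
      (hsol.mono (by rw [e2]; simp; nlinarith) (by linarith) le_rfl) (full_of_gt h1) y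
      (by rw [e2]; rw [show (2:ℝ) ^ (j + 1 + 1) * r = 2 * 2 ^ j * (2 * r) by ring] at hy; exact hy)
    rw [pow_succ c (j + 1), mul_assoc]
    exact h2

lemma ink_point {θ μ c : ℝ} (hG : Growth n θ μ c) {w : Eu n → ℝ → ℝ} {x : Eu n}
    {t R T lam : ℝ} (hlam : 0 < lam) (hR1 : R ≤ 1) (hT : t + 7 ≤ T)
    (hsol : SolP θ x 8 t T w)
    (hno : ∀ s ∈ Icc t (t + (2 / 3) * R ^ 2), ¬ Full μ w lam x s R) (j : ℕ) :
    ∀ s ϱ : ℝ, 0 < ϱ → 2 ^ j * ϱ = R → s ∈ Icc t (t + (2 / 3) * ϱ ^ 2) → Full μ w lam x s ϱ →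
    ∃ s' ϱ' : ℝ, 0 < ϱ' ∧ ϱ' ≤ R ∧ s' ∈ Icc t (t + (2 / 3) * ϱ' ^ 2) ∧ ¬ Full μ w lam x s' ϱ' ∧
      ∀ z ∈ cyl x s' ϱ', c * lam < w z.1 z.2 := by
  induction j with
  | zero =>
    intro s ϱ hϱ he hs hf
    simp only [pow_zero, one_mul] at he
    subst he
    exact absurd hf (hno s hs)
  | succ j ih =>
    intro s ϱ hϱ he hs hf
    have h2j : (1:ℝ) ≤ 2 ^ j := one_le_pow₀ (by norm_num)
    have e2 : 2 ^ j * (2 * ϱ) = R := by rw [← he]; ring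
    have h2 : 2 * ϱ ≤ R := by nlinarith
    have hϱ2 : ϱ ^ 2 ≤ 1 / 4 := by nlinarith
    have h1 := gstep hG hϱ (by linarith) hlam
      (hsol.mono (c' := x) (R' := 8 * ϱ) (a' := s) (b' := T) (by simp; linarith) hs.1 le_rfl)
      (by linarith [hs.2]) hf
    have hs' : s + 2 * ϱ ^ 2 ∈ Icc t (t + (2 / 3) * (2 * ϱ) ^ 2) :=
      ⟨by nlinarith [hs.1], by nlinarith [hs.2]⟩
    by_cases hfull : Full μ w lam x (s + 2 * ϱ ^ 2) (2 * ϱ)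
    · exact ih _ _ (by positivity) e2 hs' hfull
    · exact ⟨_, _, by positivity, h2, hs', hfull, fun z hz => h1 z.1 hz.1 z.2 hz.2⟩


/-! ### Covering argument -/

lemma cyl_meas (x : Eu n) (t r : ℝ) : MeasurableSet (cyl x t r) :=
  (isClosed_closedBall.prod isClosed_Icc).measurableSet

lemma cyl_interior (x : Eu n) (t : ℝ) {r : ℝ} (hr : 0 < r) : (interior (cyl x t r)).Nonempty := by
  refine ⟨(x, t + r ^ 2 / 2), ?_⟩
  have h2 : 0 < r ^ 2 := by positivity
  rw [cyl, interior_prod_eq, interior_Icc]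
  refine ⟨ball_subset_interior_closedBall (mem_ball_self hr), ?_, ?_⟩ <;> simp <;> linarith

lemma vol_big (x : Eu n) (t : ℝ) {r : ℝ} (hr : 0 < r) :
    MeasureTheory.volume (closedBall x (3 * r) ×ˢ Icc (t - 7 * r ^ 2) (t + r ^ 2)) ≤
      ENNReal.ofReal (r ^ (n + 2)) *
        MeasureTheory.volume (closedBall (0 : Eu n) 3 ×ˢ Icc (-7:ℝ) 1) := by
  have h2 : 0 < r ^ 2 := by positivity
  have h1 := volscale x t hr (closedBall x (3 * r) ×ˢ Icc (t - 7 * r ^ 2) (t + r ^ 2))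
  have h3 : {z : Eu n × ℝ | (x + r • z.1, t + r ^ 2 * z.2) ∈
      closedBall x (3 * r) ×ˢ Icc (t - 7 * r ^ 2) (t + r ^ 2)} ⊆
      closedBall (0 : Eu n) 3 ×ˢ Icc (-7:ℝ) 1 := by
    rintro z ⟨hz1, hz2, hz3⟩
    simp only [mem_closedBall, dist_self_add_left, norm_smul, Real.norm_of_nonneg hr.le] at hz1 hz2 hz3
    refine ⟨?_, ?_, ?_⟩
    · simp only [mem_closedBall, dist_zero_right]; nlinarith
    · nlinarith
    · nlinarith
  have h4 := MeasureTheory.measure_mono (μ := MeasureTheory.volume) h3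
  rw [h1] at h4
  calc _ = ENNReal.ofReal (r ^ (n + 2)) * (ENNReal.ofReal ((r ^ (n + 2))⁻¹) *
      MeasureTheory.volume (closedBall x (3 * r) ×ˢ Icc (t - 7 * r ^ 2) (t + r ^ 2))) := by
        rw [← mul_assoc, ← ENNReal.ofReal_mul (by positivity), mul_inv_cancel₀ (by positivity)]
        simp
    _ ≤ _ := by gcongr

lemma cover {μ : ℝ} (hμ : 0 < μ) (E F : Set (Eu n × ℝ)) (hF : MeasurableSet F)
    (h : ∀ z ∈ E, ∃ s ϱ : ℝ, 0 < ϱ ∧ ϱ ≤ 1 ∧ s ∈ Icc z.2 (z.2 + (2 / 3) * ϱ ^ 2) ∧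
      ENNReal.ofReal (μ * ϱ ^ (n + 2)) ≤ MeasureTheory.volume (cyl z.1 s ϱ ∩ F)) :
    ENNReal.ofReal μ * MeasureTheory.volume E ≤
      MeasureTheory.volume (closedBall (0 : Eu n) 3 ×ˢ Icc (-7:ℝ) 1) * MeasureTheory.volume F := by
  choose! s ϱ h0 h1 hs hv using h
  obtain ⟨u, huE, hdis, hcov⟩ := Vitali.exists_disjoint_subfamily_covering_enlargement
    (fun z : Eu n × ℝ => cyl z.1 (s z) (ϱ z)) E ϱ 2 (by norm_num) (fun z hz => (h0 z hz).le) 1 h1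
    (fun z hz => (cyl_interior z.1 (s z) (h0 z hz)).mono interior_subset)
  have hcount : u.Countable := hdis.countable_of_nonempty_interior
    (fun z hz => cyl_interior z.1 (s z) (h0 z (huE hz)))
  set big : Eu n × ℝ → Set (Eu n × ℝ) := fun z =>
    closedBall z.1 (3 * ϱ z) ×ˢ Icc (s z - 7 * ϱ z ^ 2) (s z + ϱ z ^ 2) with hbig
  have hsub : E ⊆ ⋃ z ∈ u, big z := by
    intro a ha
    obtain ⟨b, hb, ⟨y, ⟨hy1, hy2⟩, hy3, hy4⟩, hab⟩ := hcov a ha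
    refine mem_biUnion hb ⟨?_, ?_, ?_⟩
    · simp only [mem_closedBall] at *
      have := dist_triangle_left a.1 b.1 y.1
      linarith
    · have h1 := (hs a ha).2
      have h2 := hy2.2
      have h3 := hy4.1
      have h4 : ϱ a ^ 2 ≤ 4 * ϱ b ^ 2 := by
        have := h0 a ha
        nlinarith
      have := sq_nonneg (ϱ b)
      linarith
    · have h1 := (hs a ha).1
      have h2 := hy2.1
      have h3 := hy4.2
      linarith
  set V := MeasureTheory.volume (closedBall (0 : Eu n) 3 ×ˢ Icc (-7:ℝ) 1) with hV
  calc ENNReal.ofReal μ * MeasureTheory.volume E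
      ≤ ENNReal.ofReal μ * ∑' z : u, MeasureTheory.volume (big z) := by
        gcongr
        exact (MeasureTheory.measure_mono hsub).trans (MeasureTheory.measure_biUnion_le _ hcount _)
    _ = ∑' z : u, ENNReal.ofReal μ * MeasureTheory.volume (big z) := by rw [ENNReal.tsum_mul_left]
    _ ≤ ∑' z : u, V * MeasureTheory.volume (cyl z.1.1 (s z) (ϱ z) ∩ F) := by
        refine ENNReal.tsum_le_tsum fun z => ?_
        have hz := huE z.2
        calc _ ≤ ENNReal.ofReal μ * (ENNReal.ofReal (ϱ z ^ (n + 2)) * V) := by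
              gcongr
              exact vol_big z.1.1 (s z) (h0 z hz)
          _ = V * ENNReal.ofReal (μ * ϱ z ^ (n + 2)) := by
              rw [ENNReal.ofReal_mul hμ.le]; ring
          _ ≤ _ := by gcongr; exact hv z hz
    _ = V * ∑' z : u, MeasureTheory.volume (cyl z.1.1 (s z) (ϱ z) ∩ F) := by rw [ENNReal.tsum_mul_left]
    _ = V * MeasureTheory.volume (⋃ z ∈ u, cyl z.1 (s z) (ϱ z) ∩ F) := by
        congr 1
        rw [MeasureTheory.measure_biUnion hcount]
        · exact fun a ha b hb hab => (hdis ha hb hab).mono inter_subset_left inter_subset_left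
        · exact fun z _ => (cyl_meas _ _ _).inter hF
    _ ≤ _ := by
        gcongr
        exact iUnion₂_subset fun z _ => inter_subset_right

/-- superlevel sets -/
def lev (w : Eu n → ℝ → ℝ) (lam R : ℝ) : Set (Eu n × ℝ) :=
  {z | z ∈ closedBall (0 : Eu n) R ×ˢ Icc 0 R ∧ lam < w z.1 z.2}

lemma Sol.cont {θ L : ℝ} {x : Eu n} {R a b : ℝ} {w : Eu n → ℝ → ℝ} (h : Sol θ L x R a b w) :
    ContinuousOn (fun z : Eu n × ℝ => w z.1 z.2) (closedBall x R ×ˢ Icc a b) := by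
  obtain ⟨p, q, H, h⟩ := h
  exact h.wc

lemma lev_meas {w : Eu n → ℝ → ℝ} {lam R : ℝ}
    (h : ContinuousOn (fun z : Eu n × ℝ => w z.1 z.2) (closedBall (0 : Eu n) R ×ˢ Icc 0 R)) :
    MeasurableSet (lev w lam R) := by
  obtain ⟨U, hU, he⟩ := (_root_.continuousOn_iff'.1 h) (Ioi lam) isOpen_Ioi
  have : lev w lam R = U ∩ (closedBall (0 : Eu n) R ×ˢ Icc 0 R) := by
    rw [← he]
    ext z
    simp only [lev, mem_inter_iff, mem_preimage, mem_Ioi]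
    exact And.comm
  rw [this]
  exact hU.measurableSet.inter (isClosed_closedBall.prod isClosed_Icc).measurableSet

lemma ink_step {θ μ c : ℝ} (hμ : 0 < μ) (hc : c ∈ Ioo (0:ℝ) 1) (hG : Growth n θ μ c)
    {w : Eu n → ℝ → ℝ} {R R' r T lam : ℝ} (hlam : 0 < lam) (hr : 0 < r) (hr1 : r ≤ 1)
    (h1 : R + r ≤ R') (h2 : R + 2 * r ^ 2 ≤ R') (hR' : R' ≤ 2) (hT : 13 ≤ T)
    (hsol : SolP θ (0 : Eu n) 18 0 T w)
    (hno : ∀ x ∈ closedBall (0 : Eu n) 2, ∀ s ∈ Icc (0:ℝ) 2, ¬ Full μ w lam x s r) :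
    ENNReal.ofReal μ * MeasureTheory.volume (lev w lam R) ≤
      MeasureTheory.volume (closedBall (0 : Eu n) 3 ×ˢ Icc (-7:ℝ) 1) *
        MeasureTheory.volume (lev w (c * lam) R' \ lev w lam R') := by
  have hcR : ContinuousOn (fun z : Eu n × ℝ => w z.1 z.2) (closedBall (0 : Eu n) R' ×ˢ Icc 0 R') :=
    hsol.1.cont.mono (prod_mono (closedBall_subset_closedBall (by linarith))
      (Icc_subset_Icc le_rfl (by linarith)))
  refine cover hμ _ _ ((lev_meas hcR).diff (lev_meas hcR)) ?_
  rintro ⟨x, t⟩ ⟨⟨hx, ht⟩, hw⟩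
  simp only at hx ht hw
  have hr2 : 0 < r ^ 2 := by positivity
  have hxn : dist x 0 ≤ 2 := by
    simp only [mem_closedBall] at hx; linarith
  have hloc : ∀ᶠ ϱ in 𝓝[>] (0:ℝ), ∀ z ∈ cyl x t ϱ, lam < w z.1 z.2 := by
    have hc2 := hsol.1.cont (x, t) ⟨by simp at hxn ⊢; linarith, ⟨ht.1, by linarith [ht.2]⟩⟩
    have h3 := hc2.eventually (lt_mem_nhds hw)
    rw [eventually_nhdsWithin_iff, Metric.eventually_nhds_iff] at h3
    obtain ⟨e, he, h3⟩ := h3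
    have : Ioo (0:ℝ) (min (e / 2) (1 / 2)) ∈ 𝓝[>] (0:ℝ) := Ioo_mem_nhdsGT (by positivity)
    filter_upwards [this] with ϱ hϱ z hz
    have h5 : ϱ < e / 2 := hϱ.2.trans_le (min_le_left _ _)
    have h6 : ϱ < 1 / 2 := hϱ.2.trans_le (min_le_right _ _)
    have h7 : ϱ ^ 2 < ϱ := by nlinarith [hϱ.1]
    have h8 := hz.1
    have h9 := hz.2.1
    have h10 := hz.2.2
    simp only [mem_closedBall] at h8
    refine h3 ?_ ⟨?_, ?_, ?_⟩
    · rw [Prod.dist_eq, max_lt_iff]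
      refine ⟨by simp only; linarith, ?_⟩
      simp only [Real.dist_eq]
      rw [abs_lt]; constructor <;> linarith
    · have := dist_triangle z.1 x 0
      simp only [mem_closedBall]; linarith
    · linarith [ht.1]
    · linarith [ht.2]
  have hj : Tendsto (fun j : ℕ => (2:ℝ)⁻¹ ^ j * r) atTop (𝓝[>] 0) := by
    refine tendsto_nhdsWithin_iff.2 ⟨?_, Eventually.of_forall fun j => by simp; positivity⟩
    simpa using (tendsto_pow_atTop_nhds_zero_of_lt_one (r := (2:ℝ)⁻¹) (by norm_num) (by norm_num)).mul_const r
  obtain ⟨j, hj⟩ := (hj.eventually hloc).exists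
  obtain ⟨s, ϱ, hϱ, hϱr, hs, hnf, hgt⟩ := ink_point hG (x := x) (t := t) (R := r) (T := T) hlam hr1
    (by linarith [ht.2]) (hsol.mono (by linarith) ht.1 le_rfl)
    (fun s hs => hno x hxn s ⟨by linarith [ht.1, hs.1], by linarith [hs.2, ht.2]⟩) j t
    ((2:ℝ)⁻¹ ^ j * r) (by positivity) (by rw [← mul_assoc, ← mul_pow]; norm_num)
    ⟨le_rfl, by nlinarith [sq_nonneg ((2:ℝ)⁻¹ ^ j * r)]⟩
    (full_of_gt fun y hy s hs => hj (y, s) ⟨hy, hs⟩)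
  refine ⟨s, ϱ, hϱ, hϱr.trans hr1, hs, ?_⟩
  rw [Full, not_le] at hnf
  refine hnf.le.trans (MeasureTheory.measure_mono ?_)
  rintro z ⟨hz, hzl⟩
  refine ⟨hz, ⟨⟨?_, ?_, ?_⟩, hgt z hz⟩, fun hh => absurd hh.2 (not_lt.2 hzl)⟩
  · have := hz.1
    have h4 := dist_triangle z.1 x 0
    simp only [mem_closedBall] at *
    linarith
  · linarith [hz.2.1, hs.1, ht.1]
  · have : ϱ ^ 2 ≤ r ^ 2 := by gcongr
    linarith [hz.2.2, hs.2, ht.2]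


lemma box_fin (R a b : ℝ) : MeasureTheory.volume (closedBall (0 : Eu n) R ×ˢ Icc a b) ≠ ⊤ :=
  ((isCompact_closedBall _ _).prod isCompact_Icc).measure_ne_top

lemma lemC {θ μ c : ℝ} (hμ : 0 < μ) (hc : c ∈ Ioo (0:ℝ) 1) (hG : Growth n θ μ c) {μ0 : ℝ}
    (hμ0 : 0 < μ0) : ∃ c1 > (0:ℝ), ∀ (w : Eu n → ℝ → ℝ) (s : ℝ), s ∈ Icc (13:ℝ) 16 →
      SolP θ (0 : Eu n) 18 0 s w → ENNReal.ofReal μ0 ≤ MeasureTheory.volume (lev w 1 1) →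
      ∀ y ∈ closedBall (0 : Eu n) 2, c1 ≤ w y s := by
  set V := MeasureTheory.volume (closedBall (0 : Eu n) 3 ×ˢ Icc (-7:ℝ) 1) with hV
  have hVf : V ≠ ⊤ := box_fin _ _ _
  set β := V.toReal + 1 with hβ
  have hβ0 : 0 < β := by positivity
  set M := (MeasureTheory.volume (closedBall (0 : Eu n) 2 ×ˢ Icc (0:ℝ) 2)).toReal with hM
  obtain ⟨K, hK⟩ := pow_unbounded_of_one_lt (M / μ0) (show 1 < 1 + μ / β by
    have := div_pos hμ hβ0; linarith)
  have hK' : M < μ0 * (1 + μ / β) ^ (K + 1) := by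
    rw [div_lt_iff₀ hμ0] at hK
    have : (1 + μ / β) ^ K ≤ (1 + μ / β) ^ (K + 1) :=
      pow_le_pow_right₀ (by have := div_pos hμ hβ0; linarith) (by omega)
    nlinarith
  set N := K + 1 with hN
  have hN0 : (0:ℝ) < N := by rw [hN]; positivity
  obtain ⟨i, hi⟩ := exists_pow_lt_of_lt_one (show 0 < 1 / (2 * (N:ℝ)) by positivity)
    (show (2:ℝ)⁻¹ < 1 by norm_num)
  set r := (2:ℝ)⁻¹ ^ i with hr
  have hr0 : 0 < r := by positivity
  have hr1 : r ≤ 1 := pow_le_one₀ (by norm_num) (by norm_num)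
  have h2r : (2:ℝ) ^ i * r = 1 := by rw [hr, ← mul_pow]; norm_num
  have h4r : (4:ℝ) ^ i * r ^ 2 = 1 := by
    rw [show (4:ℝ) ^ i = (2 ^ i) ^ 2 by rw [← pow_mul, mul_comm, pow_mul]; norm_num, ← mul_pow, h2r]
    norm_num
  have hrr : r ^ 2 ≤ 1 := by nlinarith
  have hrN : 2 * r ≤ 1 / (N:ℝ) := by
    have : 1 / (2 * (N:ℝ)) = (1 / (N:ℝ)) / 2 := by field_simp
    linarith
  refine ⟨c ^ (i + 2) * c ^ N, by have := hc.1; positivity, ?_⟩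
  intro w s hs hsol hvol y hy
  by_cases hex : ∃ k ≤ N, ∃ x ∈ closedBall (0 : Eu n) 2, ∃ t ∈ Icc (0:ℝ) 2, Full μ w (c ^ k) x t r
  · obtain ⟨k, hk, x, hx, t, ht, hf⟩ := hex
    simp only [mem_closedBall] at hx hy
    have e1 : (4:ℝ) ^ (i + 1 + 1) = 16 * 4 ^ i := by ring
    have e2 : (2:ℝ) ^ (i + 1) * r = 2 := by rw [pow_succ]; linarith
    have e3 : (2:ℝ) ^ (i + 1 + 1) * r = 4 := by rw [pow_succ, pow_succ]; linarith
    have h1 := chain hG hc w x s (i + 1) t r (c ^ k) hr0 (by rw [e2]; norm_num)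
      (pow_pos hc.1 _)
      (by
        rw [e1]
        have a1 : (2 / 3) * (16 * 4 ^ i - 1) * r ^ 2 = (2 / 3) * (16 - r ^ 2) := by
          linear_combination (2 / 3) * 16 * h4r
        have a2 : 16 * 4 ^ i * r ^ 2 = 16 := by linear_combination 16 * h4r
        rw [a1, a2]
        have := sq_nonneg r
        exact ⟨by linarith [ht.2, hs.1], by linarith [ht.1, hs.2]⟩)
      (hsol.mono (by rw [e2]; linarith) ht.1 le_rfl) hf y
      (by rw [e3, mem_closedBall]; have := dist_triangle_right y x 0; linarith)
    have h3 : c ^ N ≤ c ^ k := pow_le_pow_of_le_one hc.1.le hc.2.le hk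
    have h4 : 0 < c ^ (i + 2) := pow_pos hc.1 _
    have : c ^ (i + 2) * c ^ N ≤ c ^ (i + 1 + 1) * c ^ k := by
      gcongr
    linarith
  · exfalso
    push Not at hex
    have hRle : ∀ k ≤ N, 1 + (k:ℝ) / N ≤ 2 := by
      intro k hk
      have : (k:ℝ) / N ≤ 1 := by rw [div_le_one hN0]; exact_mod_cast hk
      linarith
    have hfin : ∀ lam R, MeasureTheory.volume (lev w lam R) ≠ ⊤ := fun lam R =>
      MeasureTheory.measure_ne_top_of_subset (fun z hz => hz.1) (box_fin R 0 R)
    have key : ∀ k ≤ N, μ0 * (1 + μ / β) ^ k ≤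
        (MeasureTheory.volume (lev w (c ^ k) (1 + (k:ℝ) / N))).toReal := by
      intro k
      induction k with
      | zero =>
        intro _
        simp only [pow_zero, mul_one, Nat.cast_zero, zero_div, add_zero]
        exact (ENNReal.ofReal_le_iff_le_toReal (hfin _ _)).1 hvol
      | succ k ih =>
        intro hk
        have ih := ih (by omega)
        have hRk := hRle _ hk
        have eR : 1 + ((k + 1 : ℕ) : ℝ) / N = 1 + (k:ℝ) / N + 1 / N := by push_cast; ring
        have hst := ink_step hμ hc hG (w := w) (R := 1 + (k:ℝ) / N) (R' := 1 + ((k + 1 : ℕ) : ℝ) / N)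
          (r := r) (T := s) (lam := c ^ k) (pow_pos hc.1 _) hr0 hr1 (by rw [eR]; linarith)
          (by rw [eR]; nlinarith) hRk hs.1 hsol (fun x hx t ht => hex k (by omega) x hx t ht)
        rw [← pow_succ'] at hst
        set R' := 1 + ((k + 1 : ℕ) : ℝ) / N with hR'
        have hRR' : 1 + (k:ℝ) / N ≤ R' := by rw [eR]; have : 0 < 1 / (N:ℝ) := by positivity
                                             linarith
        have hcR : ContinuousOn (fun z : Eu n × ℝ => w z.1 z.2) (closedBall (0 : Eu n) R' ×ˢ Icc 0 R') :=
          hsol.1.cont.mono (prod_mono (closedBall_subset_closedBall (by linarith))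
            (Icc_subset_Icc le_rfl (by linarith [hs.1])))
        have hsub1 : lev w (c ^ k) R' ⊆ lev w (c ^ (k + 1)) R' := fun z hz =>
          ⟨hz.1, lt_of_le_of_lt (pow_le_pow_of_le_one hc.1.le hc.2.le (by omega)) hz.2⟩
        have hsub2 : lev w (c ^ k) (1 + (k:ℝ) / N) ⊆ lev w (c ^ k) R' := fun z hz =>
          ⟨prod_mono (closedBall_subset_closedBall hRR') (Icc_subset_Icc le_rfl hRR') hz.1, hz.2⟩
        have hst2 := ENNReal.toReal_mono (ENNReal.mul_ne_top hVf
          (MeasureTheory.measure_ne_top_of_subset sdiff_subset (hfin _ _))) hst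
        rw [ENNReal.toReal_mul, ENNReal.toReal_mul, ENNReal.toReal_ofReal hμ.le] at hst2
        have hd : (MeasureTheory.volume (lev w (c ^ (k + 1)) R' \ lev w (c ^ k) R')).toReal =
            (MeasureTheory.volume (lev w (c ^ (k + 1)) R')).toReal -
            (MeasureTheory.volume (lev w (c ^ k) R')).toReal :=
          MeasureTheory.measureReal_sdiff hsub1 (lev_meas hcR) (hfin _ _)
        have hm : (MeasureTheory.volume (lev w (c ^ k) (1 + (k:ℝ) / N))).toReal ≤
            (MeasureTheory.volume (lev w (c ^ k) R')).toReal :=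
          ENNReal.toReal_mono (hfin _ _) (MeasureTheory.measure_mono hsub2)
        rw [hd] at hst2
        set v := (MeasureTheory.volume (lev w (c ^ k) (1 + (k:ℝ) / N))).toReal
        set v' := (MeasureTheory.volume (lev w (c ^ (k + 1)) R')).toReal
        set v'' := (MeasureTheory.volume (lev w (c ^ k) R')).toReal
        have hv''v' : v'' ≤ v' := ENNReal.toReal_mono (hfin _ _) (MeasureTheory.measure_mono hsub1)
        have a1 : μ * v ≤ β * (v' - v) := by
          have : V.toReal * (v' - v'') ≤ β * (v' - v) := by
            apply mul_le_mul <;> first | linarith | positivity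
          linarith
        have a2 : (1 + μ / β) * v ≤ v' := by
          have : μ / β * v ≤ v' - v := by
            rw [div_mul_eq_mul_div, div_le_iff₀ hβ0]; linarith
          linarith
        calc μ0 * (1 + μ / β) ^ (k + 1) = (1 + μ / β) * (μ0 * (1 + μ / β) ^ k) := by ring
          _ ≤ (1 + μ / β) * v := by gcongr
          _ ≤ v' := a2
    have h1 := key N le_rfl
    have h2 : (MeasureTheory.volume (lev w (c ^ N) (1 + (N:ℝ) / N))).toReal ≤ M := by
      refine ENNReal.toReal_mono (box_fin _ _ _) (MeasureTheory.measure_mono ?_)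
      have := hRle N le_rfl
      exact fun z hz => prod_mono (closedBall_subset_closedBall this) (Icc_subset_Icc le_rfl this) hz.1
    linarith


/-! ### The Harnack inequality -/

/-- normalized lower bound from one good point -/
lemma good_point {θ μ c : ℝ} (hμ : 0 < μ) (hc : c ∈ Ioo (0:ℝ) 1) (hG : Growth n θ μ c) :
    ∃ c1 > (0:ℝ), ∀ (w : Eu n → ℝ → ℝ) (s W r A : ℝ) (k : ℕ) (x0 : Eu n) (t0 : ℝ), s ∈ Icc (12:ℝ) 16 →
      SolP θ (0 : Eu n) 20 0 s w → x0 ∈ closedBall (0 : Eu n) 1 → t0 ≤ 1 →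
      0 < W → r = (2:ℝ)⁻¹ ^ k → r ≤ 1 / 16 → 64 * r ^ 2 ≤ t0 → 1 ≤ A → A ≤ 1 + c / 4 →
      w x0 t0 = W → (∀ x ∈ closedBall x0 (8 * r), ∀ t ∈ Icc (t0 - 64 * r ^ 2) t0, w x t ≤ A * W) →
      ∀ y ∈ closedBall (0 : Eu n) 3, c ^ k * c1 * W ≤ w y s := by
  obtain ⟨c1, hc1, hC⟩ := lemC hμ hc hG hμ
  refine ⟨c ^ 2 * (c1 / 4), by have := hc.1; positivity, ?_⟩
  intro w s W r A k x0 t0 hs hsol hx0 ht01 hW hr hr16 hrt hA1 hA2 hw0 hle y hy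
  have hr0 : 0 < r := by rw [hr]; positivity
  have h2r : (2:ℝ) ^ k * r = 1 := by rw [hr, ← mul_pow]; norm_num
  have h4r : (4:ℝ) ^ k * r ^ 2 = 1 := by
    rw [show (4:ℝ) ^ k = (2 ^ k) ^ 2 by rw [← pow_mul, mul_comm, pow_mul]; norm_num, ← mul_pow, h2r]
    norm_num
  have hrr : r ^ 2 ≤ 1 / 256 := by nlinarith
  have hr2 : 0 < r ^ 2 := by positivity
  simp only [mem_closedBall] at hx0 hy
  set t' := t0 - 6 * r ^ 2 with ht'
  have hnf : ¬ Full μ (fun x t => A * W + (-1) * w x t) (W / 4) x0 t' r := by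
    intro hf
    have hs1 : Sol θ 1 x0 (8 * r) t' t0 w := (hsol.mono (by linarith) (by linarith) (by linarith [hs.1])).1
    have h1 := hG _ x0 t' r t0 (W / 4) hr0 (by linarith) (by positivity)
      ⟨by linarith, by linarith⟩ (hs1.affine (A * W) (-1))
      (fun x hx t ht => by
        have := hle x hx t ⟨by linarith [ht.1], ht.2⟩
        linarith) hf x0 (mem_closedBall_self (by positivity))
    rw [hw0] at h1
    nlinarith
  rw [Full, not_le] at hnf
  have hsc : ∀ σ ∈ Icc (13:ℝ) 16, SolP θ (0 : Eu n) 18 0 σ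
      (fun x t => (2 / W) * w (x0 + r • x) (t' + r ^ 2 * t)) := by
    intro σ hσ
    refine SolP.smul (w := fun x t => w (x0 + r • x) (t' + r ^ 2 * t)) ?_ (by positivity)
    refine SolP.scale hr0 (by linarith) (hsol.mono (by linarith) (by linarith) ?_)
    nlinarith [hσ.2, hs.1]
  have hvol : ENNReal.ofReal μ ≤ MeasureTheory.volume
      (lev (fun (x : Eu n) t => (2 / W) * w (x0 + r • x) (t' + r ^ 2 * t)) 1 1) := by
    have hsub : {z : Eu n × ℝ | (x0 + r • z.1, t' + r ^ 2 * z.2) ∈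
        {z : Eu n × ℝ | z ∈ cyl x0 t' r ∧ A * W + (-1) * w z.1 z.2 ≤ W / 4}} ⊆
        lev (fun (x : Eu n) t => (2 / W) * w (x0 + r • x) (t' + r ^ 2 * t)) 1 1 := by
      rintro z ⟨⟨hz1, hz2, hz3⟩, hz4⟩
      simp only [mem_closedBall, dist_self_add_left, norm_smul, Real.norm_of_nonneg hr0.le] at hz1 hz2 hz3 hz4
      refine ⟨⟨?_, ?_, ?_⟩, ?_⟩
      · simp only [mem_closedBall, dist_zero_right]; nlinarith
      · nlinarith
      · nlinarith
      · simp only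
        rw [div_mul_eq_mul_div, lt_div_iff₀ hW]
        nlinarith
    refine le_trans ?_ (MeasureTheory.measure_mono hsub)
    rw [volscale x0 t' hr0]
    calc ENNReal.ofReal μ = ENNReal.ofReal ((r ^ (n + 2))⁻¹) * ENNReal.ofReal (μ * r ^ (n + 2)) := by
          rw [← ENNReal.ofReal_mul (by positivity)]
          congr 1; field_simp
      _ ≤ _ := by gcongr
  have hlow : ∀ x ∈ closedBall x0 r, ∀ t ∈ Icc (t' + 13 * r ^ 2) (t' + 13 * r ^ 2 + r ^ 2),
      c1 / 4 * W < w x t := by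
    intro x hx t ht
    have hσ : (t - t') / r ^ 2 ∈ Icc (13:ℝ) 16 := by
      constructor
      · rw [le_div_iff₀ hr2]; linarith [ht.1]
      · rw [div_le_iff₀ hr2]; linarith [ht.2]
    have h1 := hC _ _ hσ (hsc _ hσ) hvol (r⁻¹ • (x - x0)) (by
      simp only [mem_closedBall, dist_zero_right, norm_smul, norm_inv, Real.norm_of_nonneg hr0.le]
      rw [inv_mul_le_iff₀ hr0, ← dist_eq_norm]
      simp only [mem_closedBall] at hx
      linarith)
    rw [smul_inv_smul₀ hr0.ne', add_sub_cancel, mul_div_cancel₀ _ hr2.ne', add_sub_cancel,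
      div_mul_eq_mul_div, le_div_iff₀ hW] at h1
    have : 0 < c1 * W := by positivity
    linarith
  have e1 : (4:ℝ) ^ (k + 1 + 1) = 16 * 4 ^ k := by ring
  have e2 : (2:ℝ) ^ (k + 1) * r = 2 := by rw [pow_succ]; linarith
  have e3 : (2:ℝ) ^ (k + 1 + 1) * r = 4 := by rw [pow_succ, pow_succ]; linarith
  have h1 := chain hG hc w x0 s (k + 1) (t' + 13 * r ^ 2) r (c1 / 4 * W) hr0 (by rw [e2]; norm_num)
    (by positivity)
    (by
      rw [e1]
      have a1 : (2 / 3) * (16 * 4 ^ k - 1) * r ^ 2 = (2 / 3) * (16 - r ^ 2) := by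
        linear_combination (2 / 3) * 16 * h4r
      have a2 : 16 * 4 ^ k * r ^ 2 = 16 := by linear_combination 16 * h4r
      rw [a1, a2]
      exact ⟨by linarith [hs.1], by linarith [hs.2]⟩)
    (hsol.mono (by rw [e2]; linarith) (by linarith) le_rfl) (full_of_gt hlow) y
    (by rw [e3, mem_closedBall]; have := dist_triangle_right y x0 0; linarith)
  have : c ^ k * (c ^ 2 * (c1 / 4)) * W = c ^ (k + 1 + 1) * (c1 / 4 * W) := by ring
  linarith

set_option maxHeartbeats 1000000 in
lemma lemH (n : ℕ) (θ : ℝ) (hθ : 0 < θ) : ∃ c2 ∈ Ioo (0:ℝ) 1, ∀ (w : Eu n → ℝ → ℝ) (s : ℝ),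
    s ∈ Icc (12:ℝ) 16 → SolP θ (0 : Eu n) 20 0 s w → 1 ≤ w 0 1 →
    ∀ y ∈ closedBall (0 : Eu n) 3, c2 ≤ w y s := by
  obtain ⟨μ, hμ, c, hc, hG⟩ := lemG n θ hθ
  obtain ⟨c1, hc1, hgp⟩ := good_point hμ hc hG
  have hc0 := hc.1
  set g := - Real.logb 2 c with hg
  have hg0 : 0 < g := by
    have := Real.logb_neg (b := 2) (by norm_num) hc.1 hc.2
    linarith
  have h2g : (2:ℝ)⁻¹ ^ g = c := by
    rw [hg, Real.inv_rpow (by norm_num), Real.rpow_neg (by norm_num), inv_inv,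
      Real.rpow_logb (by norm_num) (by norm_num) hc.1]
  obtain ⟨η, hη, hηA⟩ : ∃ η ∈ Ioo (0:ℝ) (1 / 2), ((1 - η) ^ g)⁻¹ ≤ 1 + c / 4 := by
    have h1 : Tendsto (fun η : ℝ => ((1 - η) ^ g)⁻¹) (𝓝[>] 0) (𝓝 (((1 - 0 : ℝ) ^ g)⁻¹)) := by
      have : ContinuousAt (fun η : ℝ => ((1 - η) ^ g)⁻¹) 0 := by
        refine ContinuousAt.inv₀ (ContinuousAt.rpow_const (by fun_prop) (Or.inl (by norm_num))) (by norm_num)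
      exact this.tendsto.mono_left nhdsWithin_le_nhds
    simp only [sub_zero, Real.one_rpow, inv_one] at h1
    have h2 := h1.eventually (gt_mem_nhds (show (1:ℝ) < 1 + c / 4 by linarith))
    have h3 : Ioo (0:ℝ) (1 / 2) ∈ 𝓝[>] (0:ℝ) := Ioo_mem_nhdsGT (by norm_num)
    obtain ⟨η, h4, h5⟩ := (h2.and h3).exists
    exact ⟨η, h5, h4.le⟩
  have hη0 := hη.1
  have hη1 := hη.2
  refine ⟨min (c1 * (η / 16) ^ g) (1 / 2), ⟨by positivity, lt_of_le_of_lt (min_le_right _ _) (by norm_num)⟩, ?_⟩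
  intro w s hs hsol hw01 y hy
  refine (min_le_left _ _).trans ?_
  set ρ : Eu n × ℝ → ℝ := fun z => min (1 - ‖z.1‖) (√ z.2) with hρ
  have hρc : Continuous ρ := by fun_prop
  have hD : IsCompact (closedBall (0 : Eu n) 1 ×ˢ Icc (0:ℝ) 1) := (isCompact_closedBall _ _).prod isCompact_Icc
  have hwc : ContinuousOn (fun z : Eu n × ℝ => w z.1 z.2) (closedBall (0 : Eu n) 1 ×ˢ Icc (0:ℝ) 1) :=
    hsol.1.cont.mono (prod_mono (closedBall_subset_closedBall (by norm_num))
      (Icc_subset_Icc le_rfl (by linarith [hs.1])))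
  obtain ⟨⟨x0, t0⟩, ⟨hx0, ht0⟩, hmax⟩ := hD.exists_isMaxOn (f := fun z => w z.1 z.2 * ρ z ^ g)
    ⟨(0, 0), by simp⟩
    (hwc.mul (hρc.rpow_const (fun _ => Or.inr hg0.le)).continuousOn)
  have hmax : ∀ z ∈ closedBall (0 : Eu n) 1 ×ˢ Icc (0:ℝ) 1, w z.1 z.2 * ρ z ^ g ≤ w x0 t0 * ρ (x0, t0) ^ g :=
    fun z hz => hmax hz
  simp only [mem_closedBall, dist_zero_right] at hx0
  have ht00' : 0 ≤ t0 := ht0.1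
  have ht01' : t0 ≤ 1 := ht0.2
  have hs1 := hs.1
  set ρ0 := ρ (x0, t0) with hρ0
  set W := w x0 t0 with hW
  have hN : 1 ≤ W * ρ0 ^ g := by
    have h1 := hmax (0, 1) (by simp)
    have h2 : ρ ((0 : Eu n), (1:ℝ)) = 1 := by simp [hρ]
    rw [h2] at h1
    simp only [Real.one_rpow, mul_one] at h1
    linarith
  have hρ0n : 0 ≤ ρ0 := le_min (by linarith) (Real.sqrt_nonneg _)
  have hρ00 : 0 < ρ0 := by
    rcases hρ0n.eq_or_lt with h | h
    · rw [← h, Real.zero_rpow hg0.ne'] at hN; norm_num at hN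
    · exact h
  have hρx : ρ0 ≤ 1 - ‖x0‖ := min_le_left _ _
  have hρt : ρ0 ≤ √ t0 := min_le_right _ _
  have hρ1 : ρ0 ≤ 1 := by linarith [norm_nonneg x0]
  have hρt2 : ρ0 ^ 2 ≤ t0 := by
    rw [← Real.sq_sqrt ht00']; gcongr
  have hρg : 0 < ρ0 ^ g := Real.rpow_pos_of_pos hρ00 _
  have hW0 : 0 < W := by
    by_contra h
    have : W * ρ0 ^ g ≤ 0 := mul_nonpos_of_nonpos_of_nonneg (not_lt.1 h) hρg.le
    linarith
  obtain ⟨k', hk1, hk2⟩ := exists_nat_pow_near_of_lt_one (x := η * ρ0 / 8) (y := (2:ℝ)⁻¹) (by positivity)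
    (by nlinarith) (by norm_num) (by norm_num)
  set k := k' + 1 with hk
  set r := (2:ℝ)⁻¹ ^ k with hr
  have hr0 : 0 < r := by positivity
  have hr2 : (2:ℝ)⁻¹ ^ k' = 2 * r := by rw [hr, hk, pow_succ]; ring
  rw [hr2] at hk2
  have h8r : 8 * r ≤ η * ρ0 := by linarith
  have h64 : 64 * r ^ 2 ≤ η ^ 2 * ρ0 ^ 2 := by
    have := pow_le_pow_left₀ (by positivity) h8r 2
    rw [mul_pow, mul_pow] at this
    linarith
  have hηρ : η ^ 2 * ρ0 ^ 2 ≤ ρ0 ^ 2 :=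
    mul_le_of_le_one_left (sq_nonneg _) (pow_le_one₀ hη0.le (by linarith))
  have h1η : 0 < (1 - η) ^ g := Real.rpow_pos_of_pos (by linarith) _
  have hA1 : 1 ≤ ((1 - η) ^ g)⁻¹ := by
    rw [one_le_inv₀ h1η]
    exact Real.rpow_le_one (by linarith) (by linarith) hg0.le
  have hle : ∀ x ∈ closedBall x0 (8 * r), ∀ t ∈ Icc (t0 - 64 * r ^ 2) t0,
      w x t ≤ ((1 - η) ^ g)⁻¹ * W := by
    intro x hx t ht
    have hx' : ‖x - x0‖ ≤ η * ρ0 := by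
      rw [mem_closedBall, dist_eq_norm] at hx; linarith
    have hxn : ‖x‖ ≤ ‖x0‖ + η * ρ0 := by
      have := norm_add_le x0 (x - x0)
      rw [add_sub_cancel] at this; linarith
    have ht00 : 0 ≤ t := by linarith [ht.1]
    have hp : 0 ≤ η * ρ0 := by positivity
    have hst : √ t0 ≤ √ t + η * ρ0 := by
      rw [Real.sqrt_le_left (by positivity)]
      have : 0 ≤ 2 * √ t * (η * ρ0) := by positivity
      have h3 := Real.sq_sqrt ht00
      nlinarith [ht.1]
    have hηle : η * ρ0 ≤ ρ0 := by nlinarith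
    have hx1 : ‖x‖ ≤ 1 := by linarith
    have ht1 := ht.2
    have hρx : (1 - η) * ρ0 ≤ ρ (x, t) := le_min (by simp only; linarith) (by simp only; linarith)
    have hm := hmax (x, t) ⟨by simpa only [mem_closedBall, dist_zero_right] using hx1, ht00, ht1.trans ht01'⟩
    have hw0 : 0 ≤ w x t := hsol.2 x (by simp only [mem_closedBall, dist_zero_right]; linarith) t ⟨ht00, by linarith⟩
    have h5 : ((1 - η) * ρ0) ^ g ≤ ρ (x, t) ^ g := by
      apply Real.rpow_le_rpow _ hρx hg0.le
      have : 0 ≤ 1 - η := by linarith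
      positivity
    rw [Real.mul_rpow (by linarith) hρ0n] at h5
    have h6 : w x t * ((1 - η) ^ g * ρ0 ^ g) ≤ W * ρ0 ^ g :=
      (mul_le_mul_of_nonneg_left h5 hw0).trans hm
    rw [← mul_assoc] at h6
    have h7 := le_of_mul_le_mul_right h6 hρg
    rw [inv_mul_eq_div, le_div_iff₀ h1η]
    exact h7
  have hfin := hgp w s W r _ k x0 t0 hs hsol (by simpa using hx0) ht0.2 hW0 hr (by nlinarith)
    (by linarith) hA1 hηA rfl hle y hy
  refine le_trans ?_ hfin
  have hck : c ^ k = r ^ g := by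
    rw [hr, ← h2g, ← Real.rpow_natCast, ← Real.rpow_natCast, ← Real.rpow_mul (by norm_num),
      ← Real.rpow_mul (by norm_num), mul_comm]
  have h9 : (η / 16) ^ g * ρ0 ^ g ≤ r ^ g := by
    rw [← Real.mul_rpow (by positivity) hρ0n]
    apply Real.rpow_le_rpow (by positivity) _ hg0.le
    linarith
  rw [hck]
  have h10 : (η / 16) ^ g ≤ r ^ g * W := by
    have h11 : 0 < (η / 16) ^ g := by positivity
    calc (η / 16) ^ g ≤ (η / 16) ^ g * (W * ρ0 ^ g) := le_mul_of_one_le_right h11.le hN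
      _ = ((η / 16) ^ g * ρ0 ^ g) * W := by ring
      _ ≤ _ := by gcongr
  calc c1 * (η / 16) ^ g ≤ c1 * (r ^ g * W) := by gcongr
    _ = _ := by ring


/-! ### Conversion -/

/-- pointwise data of a classical solution of (L) -/
structure RawD (θ ε : ℝ) (b : Eu n → Eu n) (U : Set (Eu n × ℝ)) (w p : Eu n → ℝ → ℝ)
    (q : Eu n → ℝ → Eu n) (H : Eu n → ℝ → Matrix (Fin n) (Fin n) ℝ) : Prop where
  wc : ContinuousOn (fun z : Eu n × ℝ => w z.1 z.2) U
  pc : ContinuousOn (fun z : Eu n × ℝ => p z.1 z.2) U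
  hc : ContinuousOn (fun z : Eu n × ℝ => H z.1 z.2) U
  dt : ∀ x t, (x, t) ∈ U → HasDerivAt (w x) (p x t) t
  dx : ∀ x t, (x, t) ∈ U → HasFDerivAt (fun y => w y t) (innerSL ℝ (q x t)) x
  dxx : ∀ x t, (x, t) ∈ U → HasFDerivAt (fun y => q y t) (cl (H x t)) x
  sym : ∀ x t, (x, t) ∈ U → (H x t).IsSymm
  eq : ∀ x t, (x, t) ∈ U → ∃ A, memS θ A ∧
    p x t = ε * trMul A (H x t) + inner ℝ (b x) (q x t)

lemma dotp_eq (x y : Eu n) : dotp x y = inner ℝ x y := by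
  simp [dotp, PiLp.inner_apply, mul_comm]

lemma raw_grad {f : Eu n → ℝ} {x : Eu n} (hf : ContDiffAt ℝ 2 f x) :
    HasFDerivAt f (innerSL ℝ (gradient f x)) x := by
  have h := (hf.differentiableAt (by norm_num)).hasGradientAt.hasFDerivAt
  refine h.congr_fderiv ?_
  ext v; simp

/-- Riesz map as a real linear map -/
def dS (n : ℕ) : (Eu n →L[ℝ] ℝ) →L[ℝ] Eu n :=
  LinearMap.toContinuousLinearMap
    { toFun := fun L => (InnerProductSpace.toDual ℝ (Eu n)).symm L
      map_add' := fun L M => map_add _ L M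
      map_smul' := fun c L => by simp }

lemma raw_grad_diff {f : Eu n → ℝ} {x : Eu n} (hf : ContDiffAt ℝ 2 f x) :
    HasFDerivAt (gradient f)
      ((dS n).comp (fderiv ℝ (fderiv ℝ f) x)) x := by
  have h1 : ContDiffAt ℝ 1 (fderiv ℝ f) x := hf.fderiv_right (by norm_num)
  have h2 := (h1.differentiableAt (by norm_num)).hasFDerivAt
  exact (dS n).hasFDerivAt.comp x h2

lemma coord_eq (v : Eu n) (i : Fin n) : v i = inner ℝ v (EuclideanSpace.single i (1:ℝ)) := by
  simp [EuclideanSpace.inner_single_right]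

lemma raw_hess_entry {f : Eu n → ℝ} {x : Eu n} (hf : ContDiffAt ℝ 2 f x) (i : Fin n) (v : Eu n) :
    fderiv ℝ (fun y => gradient f y i) x v =
      fderiv ℝ (fderiv ℝ f) x v (EuclideanSpace.single i 1) := by
  have h1 := (EuclideanSpace.proj (𝕜 := ℝ) i).hasFDerivAt.comp x (raw_grad_diff hf)
  have h2 : fderiv ℝ (fun y => gradient f y i) x = _ := h1.fderiv
  rw [h2]
  have : ∀ L : Eu n →L[ℝ] ℝ, ((InnerProductSpace.toDual ℝ (Eu n)).symm L) i = L (EuclideanSpace.single i 1) := by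
    intro L
    rw [coord_eq, InnerProductSpace.toDual_symm_apply]
  exact this _

lemma raw_of {θ ε : ℝ} {b : Eu n → Eu n} {Ω : Set (Eu n)} {T : ℝ≥0∞} {u : Eu n → ℝ → ℝ}
    {A : Eu n → ℝ → Matrix (Fin n) (Fin n) ℝ} (hA : MatC θ A Ω T) (hu : Classical21 u Ω T)
    (hs : SolveL ε A b u Ω T) : RawD θ ε b (cylO Ω T) u (tD u) (sG u) (sH u) := by
  have hsub : cylO Ω T ⊆ cylC Ω T := fun z hz => ⟨subset_closure hz.1, hz.2.1.le, hz.2.2.le⟩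
  refine ⟨hu.1.mono hsub, hu.2.2.1, hu.2.2.2, ?_, ?_, ?_, ?_, ?_⟩
  · rintro x t ⟨h1, h2, h3⟩
    exact (hu.2.1 x h1 t h2 h3).2.hasDerivAt
  · rintro x t ⟨h1, h2, h3⟩
    exact raw_grad (hu.2.1 x h1 t h2 h3).1
  · rintro x t ⟨h1, h2, h3⟩
    have hf := (hu.2.1 x h1 t h2 h3).1
    have h4 := raw_grad_diff hf
    refine h4.congr_fderiv ?_
    ext1 v
    ext i
    have h5 := raw_hess_entry hf i v
    have h6 : ((InnerProductSpace.toDual ℝ (Eu n)).symm (fderiv ℝ (fderiv ℝ fun y => u y t) x v)) i =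
      fderiv ℝ (fderiv ℝ fun y => u y t) x v (EuclideanSpace.single i 1) := by
      rw [coord_eq, InnerProductSpace.toDual_symm_apply]
    refine h6.trans (h5.symm.trans ?_)
    have hv : v = ∑ j, v j • EuclideanSpace.single j (1:ℝ) := by
      ext k; simp [Finset.sum_apply, Pi.single_apply]
    conv_lhs => rw [hv]
    rw [map_sum]
    simp only [cl, Matrix.ofLp_toEuclideanCLM, Matrix.mulVec, dotProduct, map_smul, smul_eq_mul]
    refine Finset.sum_congr rfl fun j _ => mul_comm _ _
  · rintro x t ⟨h1, h2, h3⟩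
    have hf := (hu.2.1 x h1 t h2 h3).1
    have hsy := hf.isSymmSndFDerivAt (by simp)
    ext i j
    simp only [Matrix.transpose_apply]
    exact (raw_hess_entry hf j _).trans ((hsy _ _).trans (raw_hess_entry hf i _).symm)
  · rintro x t ⟨h1, h2, h3⟩
    exact ⟨A x t, hA.2 (x, t) (hsub ⟨h1, h2, h3⟩), by rw [← dotp_eq]; exact hs x h1 t h2 h3⟩

lemma raw_scale {θ ε : ℝ} {b : Eu n → Eu n} {U : Set (Eu n × ℝ)} {w p : Eu n → ℝ → ℝ}
    {q : Eu n → ℝ → Eu n} {H : Eu n → ℝ → Matrix (Fin n) (Fin n) ℝ} (h : RawD θ ε b U w p q H)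
    (t0 : ℝ) {l k R s Kb : ℝ} (hl : 0 < l) (hlk : l ^ 2 = k ^ 2 * ε)
    (hKb : ∀ x, ‖b x‖ ≤ Kb * ‖x‖) (hK0 : 0 ≤ Kb) (hk : k ^ 2 * (Kb * R) ≤ 1)
    (hU : ∀ x t, ‖x‖ ≤ R → t ∈ Icc 0 s → (l • x, t0 + k ^ 2 * t) ∈ U) :
    Sol θ 1 (0 : Eu n) R 0 s (fun x t => w (l • x) (t0 + k ^ 2 * t)) := by
  have hm : Continuous (fun z : Eu n × ℝ => (l • z.1, t0 + k ^ 2 * z.2)) := by fun_prop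
  have hmt : MapsTo (fun z : Eu n × ℝ => (l • z.1, t0 + k ^ 2 * z.2))
    (closedBall (0 : Eu n) R ×ˢ Icc 0 s) U := fun z hz => hU _ _ (by simpa using hz.1) hz.2
  have hlx : ∀ x : Eu n, HasFDerivAt (fun y : Eu n => l • y) (l • ContinuousLinearMap.id ℝ (Eu n)) x :=
    fun x => ((hasFDerivAt_id x).const_smul l)
  refine ⟨fun x t => k ^ 2 * p (l • x) (t0 + k ^ 2 * t), fun x t => l • q (l • x) (t0 + k ^ 2 * t),
    fun x t => l ^ 2 • H (l • x) (t0 + k ^ 2 * t), h.wc.comp hm.continuousOn hmt,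
    continuousOn_const.mul (h.pc.comp hm.continuousOn hmt),
    (h.hc.comp hm.continuousOn hmt).const_smul (l ^ 2), ?_, ?_, ?_, ?_, ?_⟩
  · intro x t hx
    have h1 := h.dt _ _ (hmt hx)
    have h2 : HasDerivAt (fun s : ℝ => t0 + k ^ 2 * s) (k ^ 2) t := by
      simpa using ((hasDerivAt_id t).const_mul (k ^ 2)).const_add t0
    have := HasDerivAt.comp t h1 h2
    rw [mul_comm] at this
    exact this
  · intro x t hx
    have := (h.dx _ _ (hmt hx)).comp x (hlx x)
    refine this.congr_fderiv ?_
    ext v; simp [inner_smul_left]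
  · intro x t hx
    have := ((h.dxx _ _ (hmt hx)).comp x (hlx x)).const_smul l
    refine this.congr_fderiv ?_
    ext1 v; simp [smul_smul, pow_two]
  · intro x t hx
    rw [Matrix.IsSymm, Matrix.transpose_smul, (h.sym _ _ (hmt hx)).eq]
  · intro x t hx
    obtain ⟨A, h1, h3⟩ := h.eq _ _ (hmt hx)
    have hxR : ‖x‖ ≤ R := by simpa using hx.1
    refine ⟨A, (k ^ 2 * l⁻¹) • b (l • x), h1, ?_, ?_⟩
    · rw [norm_smul, Real.norm_of_nonneg (by positivity)]
      have h4 := hKb (l • x)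
      rw [norm_smul, Real.norm_of_nonneg hl.le] at h4
      calc k ^ 2 * l⁻¹ * ‖b (l • x)‖ ≤ k ^ 2 * l⁻¹ * (Kb * (l * ‖x‖)) := by gcongr
        _ = k ^ 2 * (Kb * ‖x‖) := by field_simp
        _ ≤ k ^ 2 * (Kb * R) := by gcongr
        _ ≤ 1 := hk
    · rw [h3, trMul_smul, inner_smul_right, inner_smul_left, hlk]
      simp only [conj_trivial]
      field_simp


/-! ### Iteration near the origin -/

lemma iter_origin (n : ℕ) (θ : ℝ) (hθ : 0 < θ) : ∃ c2 ∈ Ioo (0:ℝ) 1,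
    ∀ (Ω : Set (Eu n)) (b : Eu n → Eu n) (Kb κ ε r₀ : ℝ) (T : ℝ≥0∞) (u p : Eu n → ℝ → ℝ)
    (q : Eu n → ℝ → Eu n) (H : Eu n → ℝ → Matrix (Fin n) (Fin n) ℝ),
    RawD θ ε b (cylO Ω T) u p q H → (∀ x, ‖b x‖ ≤ Kb * ‖x‖) → 0 ≤ Kb → 0 < κ → 0 < ε →
    κ ^ 2 * (Kb * 20) ≤ 1 → 20 * (κ * √ε) < r₀ → closedBall (0 : Eu n) r₀ ⊆ Ω →
    (∀ x ∈ ball (0 : Eu n) r₀, ∀ t : ℝ, 0 < t → ENNReal.ofReal t < T → u x t ≤ 1) →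
    (∀ t : ℝ, 0 < t → ENNReal.ofReal t < T → u 0 t ≤ 0) →
    ∀ j : ℕ, ∀ x, ‖x‖ ≤ 20 * ((3 / 20) ^ j * κ * √ε) → ∀ t, 12 * κ ^ 2 * j < t →
      ENNReal.ofReal t < T → u x t ≤ (1 - c2) ^ j := by
  obtain ⟨c2, hc2, hH⟩ := lemH n θ hθ
  refine ⟨c2, hc2, ?_⟩
  intro Ω b Kb κ ε r₀ T u p q H hraw hKb hKb0 hκ hε hκK hr hsub hu1 hu0 j
  have hsε : 0 < √ε := Real.sqrt_pos.2 hε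
  have hκε : 0 < κ * √ε := by positivity
  induction j with
  | zero =>
    intro x hx t ht htT
    simp only [pow_zero, one_mul, Nat.cast_zero, mul_zero] at *
    exact hu1 x (by rw [mem_ball, dist_zero_right]; linarith) t ht htT
  | succ j ih =>
    intro x hx t ht htT
    set k := (3 / 20 : ℝ) ^ j * κ with hk
    have hk0 : 0 < k := by positivity
    have hp1 : (3 / 20 : ℝ) ^ j ≤ 1 := pow_le_one₀ (by norm_num) (by norm_num)
    have hkκ : k ≤ κ := by nlinarith
    have hk2 : k ^ 2 ≤ κ ^ 2 := by gcongr
    set l := k * √ε with hl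
    have hl0 : 0 < l := by positivity
    have hlκ : l ≤ κ * √ε := by rw [hl]; gcongr
    set t0 := t - 12 * k ^ 2 with ht0
    push_cast at ht
    have ht0' : 12 * κ ^ 2 * j < t0 := by linarith
    have hj0 : 0 ≤ 12 * κ ^ 2 * j := by positivity
    set M := (1 - c2) ^ j with hM
    have hM0 : 0 < M := pow_pos (by linarith [hc2.2]) _
    have hx' : ‖x‖ ≤ 3 * l := by
      refine hx.trans (le_of_eq ?_)
      rw [hl, hk, pow_succ]; ring
    have htimes : ∀ s ∈ Icc (0:ℝ) 12, 12 * κ ^ 2 * j < t0 + k ^ 2 * s ∧ ENNReal.ofReal (t0 + k ^ 2 * s) < T := by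
      intro s hs
      have h1 := hs.1
      have h2 := hs.2
      refine ⟨by have : 0 ≤ k ^ 2 * s := by positivity
                 linarith, lt_of_le_of_lt (ENNReal.ofReal_le_ofReal ?_) htT⟩
      have : k ^ 2 * s ≤ k ^ 2 * 12 := by gcongr
      linarith
    have hnl : ∀ y : Eu n, ‖y‖ ≤ 20 → ‖l • y‖ ≤ 20 * l := fun y hy => by
      rw [norm_smul, Real.norm_of_nonneg hl0.le, mul_comm]; gcongr
    have hS := raw_scale hraw t0 (l := l) (k := k) (R := 20) (s := 12) (Kb := Kb) hl0
      (by rw [hl, mul_pow, Real.sq_sqrt hε.le]) hKb hKb0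
      ((mul_le_mul_of_nonneg_right hk2 (by positivity)).trans hκK)
      (fun y s hy hs => ⟨hsub (by
        rw [mem_closedBall, dist_zero_right]; have := hnl y hy; simp only; linarith), by
        have := (htimes s hs).1; simp only; linarith, (htimes s hs).2⟩)
    have hS2 := hS.affine 1 (-(1 / M))
    have hres := hH _ 12 ⟨le_rfl, by norm_num⟩ ⟨hS2, ?_⟩ ?_ (l⁻¹ • x) ?_
    · simp only [smul_inv_smul₀ hl0.ne'] at hres
      rw [show t0 + k ^ 2 * 12 = t by rw [ht0]; ring] at hres
      rw [pow_succ, ← hM]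
      have : 1 + -(1 / M) * u x t = 1 - u x t / M := by ring
      rw [this, le_sub_iff_add_le, ← le_sub_iff_add_le', div_le_iff₀ hM0] at hres
      linarith
    · intro y hy s hs
      rw [mem_closedBall, dist_zero_right] at hy
      have h1 := ih (l • y) ((hnl y hy)) _ (htimes s hs).1 (htimes s hs).2
      have : u (l • y) (t0 + k ^ 2 * s) / M ≤ 1 := by rw [div_le_one hM0]; exact h1
      have h3 : 1 + -(1 / M) * u (l • y) (t0 + k ^ 2 * s) = 1 - u (l • y) (t0 + k ^ 2 * s) / M := by ring
      rw [h3]; linarith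
    · simp only [smul_zero]
      have h1 := htimes 1 ⟨by norm_num, by norm_num⟩
      have h2 := hu0 _ (lt_of_le_of_lt hj0 h1.1) h1.2
      have : 0 ≤ 1 / M := by positivity
      nlinarith
    · rw [mem_closedBall, dist_zero_right, norm_smul, norm_inv, Real.norm_of_nonneg hl0.le,
        inv_mul_le_iff₀ hl0]
      linarith


/-! ### Barrier -/

lemma compare_annulus {θ ε : ℝ} (hθ : 0 < θ) (hε : 0 < ε) {b : Eu n → Eu n} {U : Set (Eu n × ℝ)} {u p : Eu n → ℝ → ℝ}
    {q : Eu n → ℝ → Eu n} {H : Eu n → ℝ → Matrix (Fin n) (Fin n) ℝ} (h : RawD θ ε b U u p q H)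
    {m r1 s0 t1 lam : ℝ} (hm : 0 < m) {F F1 F2 : ℝ → ℝ}
    (hF : ∀ ζ > 0, HasDerivAt F (F1 ζ) ζ) (hF1 : ∀ ζ > 0, HasDerivAt F1 (F2 ζ) ζ)
    (hU : ∀ x s, m ≤ ‖x‖ → ‖x‖ ≤ r1 → s ∈ Icc s0 t1 → (x, s) ∈ U)
    (hb0 : ∀ x, m ≤ ‖x‖ → ‖x‖ ≤ r1 → u x s0 ≤ F (‖x‖ ^ 2))
    (hbm : ∀ x s, ‖x‖ = m → s ∈ Icc s0 t1 → u x s ≤ F (‖x‖ ^ 2) - lam * (s - s0))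
    (hbr : ∀ x s, ‖x‖ = r1 → s ∈ Icc s0 t1 → u x s ≤ F (‖x‖ ^ 2) - lam * (s - s0))
    (hst : ∀ x A, m ≤ ‖x‖ → ‖x‖ ≤ r1 → memS θ A →
      ε * (2 * F1 (‖x‖ ^ 2) * A.trace + 4 * F2 (‖x‖ ^ 2) * mquad A x) +
        2 * F1 (‖x‖ ^ 2) * inner ℝ (b x) x < -lam)
    (x : Eu n) (s : ℝ) (hx1 : m ≤ ‖x‖) (hx2 : ‖x‖ ≤ r1) (hs : s ∈ Icc s0 t1) :
    u x s ≤ F (‖x‖ ^ 2) - lam * (s - s0) := by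
  set D : Set (Eu n × ℝ) := ({x : Eu n | m ≤ ‖x‖} ∩ closedBall 0 r1) ×ˢ Icc s0 t1 with hD
  have hDU : D ⊆ U := fun z hz => hU z.1 z.2 hz.1.1 (by simpa using hz.1.2) hz.2
  have hDc : IsCompact D := by
    refine IsCompact.prod ?_ isCompact_Icc
    rw [inter_comm]
    exact (isCompact_closedBall _ _).inter_right (isClosed_le continuous_const continuous_norm)
  have hgc : ContinuousOn (fun z : Eu n × ℝ => F (‖z.1‖ ^ 2) - lam * (z.2 - s0) - u z.1 z.2) D := by
    refine ContinuousOn.sub (ContinuousOn.sub ?_ (by fun_prop)) (h.wc.mono hDU)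
    intro z hz
    have hz0 : 0 < ‖z.1‖ := hm.trans_le hz.1.1
    have h1 : ContinuousAt F (‖z.1‖ ^ 2) := (hF _ (by positivity)).continuousAt
    have h2 : ContinuousAt (fun z : Eu n × ℝ => ‖z.1‖ ^ 2) z := by fun_prop
    exact (ContinuousAt.comp (f := fun z : Eu n × ℝ => ‖z.1‖ ^ 2) h1 h2).continuousWithinAt
  have hxD : (x, s) ∈ D := ⟨⟨hx1, by simpa using hx2⟩, hs⟩
  obtain ⟨⟨y, τ⟩, hyD, hmin⟩ := hDc.exists_isMinOn ⟨_, hxD⟩ hgc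
  have hmin : ∀ z ∈ D, F (‖y‖ ^ 2) - lam * (τ - s0) - u y τ ≤ F (‖z.1‖ ^ 2) - lam * (z.2 - s0) - u z.1 z.2 :=
    fun z hz => hmin hz
  by_contra hneg
  have hneg' : F (‖y‖ ^ 2) - lam * (τ - s0) - u y τ < 0 := by
    have := hmin _ hxD
    simp only at this
    linarith
  have hy1 : m ≤ ‖y‖ := hyD.1.1
  have hy2 : ‖y‖ ≤ r1 := by simpa using hyD.1.2
  have hτ : τ ∈ Icc s0 t1 := hyD.2
  have hy1' : m < ‖y‖ := lt_of_le_of_ne hy1 fun e => by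
    have := hbm y τ e.symm hτ; linarith
  have hy2' : ‖y‖ < r1 := lt_of_le_of_ne hy2 fun e => by
    have := hbr y τ e hτ; linarith
  have hτ' : s0 < τ := lt_of_le_of_ne hτ.1 fun e => by
    have := hb0 y hy1 hy2
    rw [← e] at hneg'; simp at hneg'; linarith
  have hy0 : 0 < ‖y‖ := hm.trans hy1'
  have hyU : (y, τ) ∈ U := hDU hyD
  have hnear : ∀ᶠ z in 𝓝 y, m < ‖z‖ ∧ ‖z‖ < r1 :=
    (continuous_norm.continuousAt.eventually (lt_mem_nhds hy1')).and
      (continuous_norm.continuousAt.eventually (gt_mem_nhds hy2'))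
  have ht : -lam - p y τ ≤ 0 := by
    have hd : HasDerivAt (fun s => F (‖y‖ ^ 2) - lam * (s - s0) - u y s) (-lam - p y τ) τ := by
      have h1 := h.dt y τ hyU
      have h2 : HasDerivAt (fun s : ℝ => F (‖y‖ ^ 2) - lam * (s - s0)) (-lam) τ := by
        have := (((hasDerivAt_id τ).sub_const s0).const_mul lam).const_sub (F (‖y‖ ^ 2))
        simpa using this
      exact h2.sub h1
    refine deriv_nonpos_of_left hd ?_
    have : Ioo s0 τ ∈ 𝓝[<] τ := Ioo_mem_nhdsLT hτ'
    filter_upwards [this] with s hs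
    exact hmin (y, s) ⟨hyD.1, hs.1.le, hs.2.le.trans hτ.2⟩
  have htr := touch_radial (W := fun z => - u z τ) (q := fun z => - q z τ) (H := - H y τ) (x := y) (y0 := 0)
    (F := fun ζ => - F ζ) (F1 := fun ζ => - F1 ζ) (f2 := - F2 (‖y‖ ^ 2))
    (by
      filter_upwards [hnear] with z hz
      rw [map_neg]
      exact (h.dx z τ (hU z τ hz.1.le hz.2.le hτ)).neg)
    (by
      have := (h.dxx y τ hyU).neg
      refine this.congr_fderiv ?_
      simp only [cl, map_neg])
    (by rw [Matrix.IsSymm, Matrix.transpose_neg, (h.sym y τ hyU).eq])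
    (by
      have : ‖y - 0‖ ^ 2 > 0 := by rw [sub_zero]; positivity
      filter_upwards [lt_mem_nhds this] with ζ hζ using (hF ζ hζ).neg)
    (by rw [sub_zero]; exact (hF1 _ (by positivity)).neg)
    (by
      filter_upwards [hnear] with z hz
      have := hmin (z, τ) ⟨⟨hz.1.le, by simpa using hz.2.le⟩, hτ⟩
      simp only [sub_zero] at this ⊢
      linarith)
  simp only [sub_zero] at htr
  obtain ⟨hq, hpsd⟩ := htr
  obtain ⟨A, hA, heq⟩ := h.eq y τ hyU
  have h1 := trMul_psd (hA.psd hθ) hpsd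
  rw [trMul_sub, trMul_radH] at h1
  have h2 : trMul A (- H y τ) = - trMul A (H y τ) := by simp [trMul]
  rw [h2] at h1
  have hq' : q y τ = (2 * F1 (‖y‖ ^ 2)) • y := by
    rw [← neg_neg (q y τ), hq, ← neg_smul]; congr 1; ring
  rw [hq', inner_smul_right] at heq
  have h3 := hst y A hy1 hy2 hA
  have h4 : ε * trMul A (H y τ) ≤ ε * (2 * F1 (‖y‖ ^ 2) * A.trace + 4 * F2 (‖y‖ ^ 2) * mquad A y) := by
    gcongr
    linarith
  linarith

lemma hasDerivAt_inv_pow' (m : ℕ) {ζ : ℝ} (hζ : 0 < ζ) :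
    HasDerivAt (fun z : ℝ => (z⁻¹) ^ m) (-(m * (ζ⁻¹) ^ (m + 1))) ζ := by
  have := (hasDerivAt_inv hζ.ne').pow m
  refine this.congr_deriv ?_
  cases m with
  | zero => simp
  | succ m => simp only [Nat.add_sub_cancel, ← inv_pow]; ring

/-- the logarithmic barrier -/
def bF (k M : ℝ) (N : ℕ) (ζ : ℝ) : ℝ := Real.log ζ - Real.log k + M * (1 - k ^ N * (ζ⁻¹) ^ N)
/-- its derivative -/
def bF1 (k M : ℝ) (N : ℕ) (ζ : ℝ) : ℝ := ζ⁻¹ + M * (k ^ N * (N * (ζ⁻¹) ^ (N + 1)))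
/-- its second derivative -/
def bF2 (k M : ℝ) (N : ℕ) (ζ : ℝ) : ℝ :=
  -(ζ ^ 2)⁻¹ - M * (k ^ N * (N * ((N + 1 : ℕ) * (ζ⁻¹) ^ (N + 1 + 1))))

lemma bF_deriv (k M : ℝ) (N : ℕ) {ζ : ℝ} (hζ : 0 < ζ) : HasDerivAt (bF k M N) (bF1 k M N ζ) ζ := by
  have h1 := (Real.hasDerivAt_log hζ.ne').sub_const (Real.log k)
  have h2 := (((hasDerivAt_inv_pow' N hζ).const_mul (k ^ N)).const_sub 1).const_mul M
  refine (h1.add h2).congr_deriv ?_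
  simp only [bF1]; ring

lemma bF1_deriv (k M : ℝ) (N : ℕ) {ζ : ℝ} (hζ : 0 < ζ) : HasDerivAt (bF1 k M N) (bF2 k M N ζ) ζ := by
  have h1 := hasDerivAt_inv hζ.ne'
  have h2 := (((hasDerivAt_inv_pow' (N + 1) hζ).const_mul (N:ℝ)).const_mul (k ^ N)).const_mul M
  refine (h1.add h2).congr_deriv ?_
  simp only [bF2]; ring

lemma bF_nonneg {k M : ℝ} (hk : 0 < k) (hM : 0 ≤ M) (N : ℕ) {ζ : ℝ} (hζ : k ≤ ζ) : 0 ≤ bF k M N ζ := by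
  have h1 := Real.log_le_log hk hζ
  have h2 : k ^ N * (ζ⁻¹) ^ N ≤ 1 := by
    rw [← mul_pow]
    have hz : 0 < ζ := hk.trans_le hζ
    refine pow_le_one₀ (by positivity) ?_
    rw [← div_eq_mul_inv, div_le_one hz]; exact hζ
  have h3 : 0 ≤ M * (1 - k ^ N * (ζ⁻¹) ^ N) := mul_nonneg hM (by linarith)
  rw [bF]; linarith

lemma bF_le {k M : ℝ} (hk : 0 < k) (hM : 0 ≤ M) (N : ℕ) {ζ Z : ℝ} (hζ : 0 < ζ) (hZ : ζ ≤ Z) :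
    bF k M N ζ ≤ Real.log Z - Real.log k + M := by
  have h1 := Real.log_le_log hζ hZ
  have h2 : 0 ≤ M * (k ^ N * (ζ⁻¹) ^ N) := by positivity
  rw [bF]; linarith

/-- the barrier inequality -/
lemma bF_ineq {θ ε b₀ B κ : ℝ} (hθ : 0 < θ) (hε : 0 < ε) (hb₀ : 0 < b₀) (hκ : 0 < κ) {N : ℕ} (hN1 : 1 ≤ N)
    (hN : (n:ℝ) / θ ≤ 2 * θ * (N + 1)) (hB : B = 2 * (n:ℝ) / (θ * κ ^ 2)) {A : Matrix (Fin n) (Fin n) ℝ}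
    (hA : memS θ A) {x v : Eu n} (hx : 0 < ‖x‖) (hv : inner ℝ v x ≤ -b₀ * ‖x‖ ^ 2) :
    ε * (2 * bF1 (κ ^ 2 * ε) ((B / b₀) ^ N) N (‖x‖ ^ 2) * A.trace +
      4 * bF2 (κ ^ 2 * ε) ((B / b₀) ^ N) N (‖x‖ ^ 2) * mquad A x) +
      2 * bF1 (κ ^ 2 * ε) ((B / b₀) ^ N) N (‖x‖ ^ 2) * inner ℝ v x ≤ -b₀ := by
  set ζ := ‖x‖ ^ 2 with hζ
  have hζ0 : 0 < ζ := by positivity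
  have hB0 : 0 ≤ B := by rw [hB]; positivity
  set y := B / b₀ * (κ ^ 2 * ε) * ζ⁻¹ with hy
  have hy0 : 0 ≤ y := by positivity
  set X := (N:ℝ) * y ^ N with hX
  have hX0 : 0 ≤ X := by positivity
  have e1 : bF1 (κ ^ 2 * ε) ((B / b₀) ^ N) N ζ = (1 + X) / ζ := by
    rw [bF1, hX, hy, mul_pow, mul_pow]; rw [div_eq_mul_inv]; ring
  have e2 : bF2 (κ ^ 2 * ε) ((B / b₀) ^ N) N ζ = -((1 + (N + 1) * X) / ζ ^ 2) := by
    rw [bF2, hX, hy, mul_pow, mul_pow]; push_cast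
    rw [div_eq_mul_inv, ← inv_pow]; ring
  rw [e1, e2]
  have htr := hA.trace_le
  have hmq := (hA.2 x).1
  rw [← hζ] at hmq
  have hyy : y ≤ 1 + 2 * X := by
    rcases le_total y 1 with h | h
    · linarith
    · have h1 : y ≤ y ^ N := le_self_pow₀ h (by omega)
      have h2 : (1:ℝ) ≤ N := by exact_mod_cast hN1
      have h3 : y ^ N ≤ X := by rw [hX]; nlinarith [pow_nonneg hy0 N]
      linarith
  have hby : ε * (2 * (n / θ) / ζ) = b₀ * y := by
    rw [hy, hB]; field_simp
  have a1 : 2 * ((1 + X) / ζ) * A.trace ≤ 2 * ((1 + X) / ζ) * (n / θ) := by gcongr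
  have a2 : 4 * -((1 + (N + 1) * X) / ζ ^ 2) * mquad A x ≤ 4 * -((1 + (N + 1) * X) / ζ ^ 2) * (θ * ζ) := by
    apply mul_le_mul_of_nonpos_left hmq
    have : 0 ≤ (1 + (N + 1) * X) / ζ ^ 2 := by positivity
    linarith
  have a3 : 2 * ((1 + X) / ζ) * inner ℝ v x ≤ 2 * ((1 + X) / ζ) * (-b₀ * ζ) := by gcongr
  have a4 : 2 * ((1 + X) / ζ) * (-b₀ * ζ) = -2 * b₀ * (1 + X) := by field_simp
  have a5 : 4 * -((1 + (N + 1) * X) / ζ ^ 2) * (θ * ζ) = -(4 * θ * (1 + (N + 1) * X)) / ζ := by field_simp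
  have a6 : 2 * ((1 + X) / ζ) * (n / θ) + -(4 * θ * (1 + (N + 1) * X)) / ζ ≤ 2 * (n / θ) / ζ := by
    have : 2 * ((1 + X) / ζ) * (n / θ) + -(4 * θ * (1 + (N + 1) * X)) / ζ =
      (2 * (n / θ) + (2 * X * (n / θ - 2 * θ * (N + 1)) - 4 * θ)) / ζ := by ring
    rw [this]
    gcongr
    have h5 : X * (n / θ - 2 * θ * (N + 1)) ≤ 0 := mul_nonpos_of_nonneg_of_nonpos hX0 (by linarith)
    linarith
  have a7 : ε * (2 * ((1 + X) / ζ) * A.trace + 4 * -((1 + (N + 1) * X) / ζ ^ 2) * mquad A x) ≤ b₀ * y := by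
    rw [← hby]
    gcongr
    linarith
  nlinarith


/-! ### Conclusion -/

lemma core_step {θ ε b₀ r₀ r1 ks B δ tb τ1 : ℝ} (hθ : 0 < θ) (hε : 0 < ε) (hb₀ : 0 < b₀) (hr1 : 0 < r1)
    (hr10 : r1 < r₀) (hks : 0 < ks) (hδ : 0 < δ) (htb : 0 ≤ tb) (hτ1 : 0 < τ1)
    {b : Eu n → Eu n} {Ω : Set (Eu n)} {T : ℝ≥0∞} {u p : Eu n → ℝ → ℝ}
    {q : Eu n → ℝ → Eu n} {H : Eu n → ℝ → Matrix (Fin n) (Fin n) ℝ}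
    (h : RawD θ ε b (cylO Ω T) u p q H) (hsub : closedBall (0 : Eu n) r₀ ⊆ Ω)
    (hco : ∀ x ∈ ball (0 : Eu n) r₀, dotp (b x) x ≤ -b₀ * ‖x‖ ^ 2)
    (hu1 : ∀ x ∈ ball (0 : Eu n) r₀, ∀ t : ℝ, 0 < t → ENNReal.ofReal t < T → u x t ≤ 1)
    (hnear : ∀ x : Eu n, ‖x‖ ≤ ks * √ε → ∀ t, tb < t → ENNReal.ofReal t < T → u x t ≤ δ / 2)
    {N : ℕ} (hN1 : 1 ≤ N) (hN : (n:ℝ) / θ ≤ 2 * θ * (N + 1)) (hB : B = 2 * (n:ℝ) / (θ * ks ^ 2))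
    (hτε : 2 * (n:ℝ) / (θ * r1 ^ 2) * (ε * τ1) < 1)
    (hτl : 2 / (b₀ * τ1) * (Real.log (r1 ^ 2) - Real.log (ks ^ 2 * ε) + (B / b₀) ^ N) ≤ δ / 4)
    (x : Eu n) (hx : ‖x‖ ≤ r1) (hx' : ‖x‖ ^ 2 / r1 ^ 2 ≤ δ / 4) (t : ℝ) (ht : tb + τ1 < t)
    (htT : ENNReal.ofReal t < T) : u x t ≤ δ := by
  have hsε : 0 < √ε := Real.sqrt_pos.2 hε
  rcases le_total ‖x‖ (ks * √ε) with hxm | hxm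
  · have := hnear x hxm t (by linarith) htT
    linarith
  set m := ks * √ε with hm
  have hm0 : 0 < m := by positivity
  set k := ks ^ 2 * ε with hk
  have hk0 : 0 < k := by positivity
  have hkm : m ^ 2 = k := by rw [hm, mul_pow, Real.sq_sqrt hε.le]
  have hB0 : 0 ≤ B := by rw [hB]; positivity
  set M := (B / b₀) ^ N with hM
  have hM0 : 0 ≤ M := by positivity
  set a := 2 / (b₀ * τ1) with ha
  have ha0 : 0 < a := by positivity
  have hmem : ∀ s ∈ Icc (t - τ1) t, tb < s ∧ 0 < s ∧ ENNReal.ofReal s < T := fun s hs =>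
    ⟨by linarith [hs.1], by linarith [hs.1], (ENNReal.ofReal_le_ofReal hs.2).trans_lt htT⟩
  have hnn : ∀ y : Eu n, m ≤ ‖y‖ → 0 ≤ a * bF k M N (‖y‖ ^ 2) := fun y hy =>
    mul_nonneg ha0.le (bF_nonneg hk0 hM0 N (by rw [← hkm]; gcongr))
  have hin : ∀ y : Eu n, ‖y‖ ≤ r1 → y ∈ ball (0 : Eu n) r₀ := fun y hy => by
    rw [mem_ball, dist_zero_right]; linarith
  have hlam : ∀ s ∈ Icc (t - τ1) t, 1 / τ1 * (s - (t - τ1)) ≤ 1 := fun s hs => by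
    rw [one_div, inv_mul_le_iff₀ hτ1]; linarith [hs.2]
  have key := compare_annulus (m := m) (r1 := r1) (s0 := t - τ1) (t1 := t) (lam := 1 / τ1) hθ hε h hm0
    (F := fun ζ => δ / 2 + 1 + a * bF k M N ζ + ζ / r1 ^ 2)
    (F1 := fun ζ => a * bF1 k M N ζ + 1 / r1 ^ 2) (F2 := fun ζ => a * bF2 k M N ζ)
    (fun ζ hζ => by
      exact (((bF_deriv k M N hζ).const_mul a).const_add (δ / 2 + 1)).add ((hasDerivAt_id ζ).div_const (r1 ^ 2)))
    (fun ζ hζ => ((bF1_deriv k M N hζ).const_mul a).add_const _)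
    (fun y s _ hy2 hs => ⟨hsub (ball_subset_closedBall (hin y hy2)), (hmem s hs).2⟩)
    (fun y hy1 hy2 => by
      have h1 := hnn y hy1
      have h2 : 0 ≤ ‖y‖ ^ 2 / r1 ^ 2 := by positivity
      have h3 := hu1 y (hin y hy2) (t - τ1) (by linarith) ((hmem (t - τ1) ⟨le_rfl, by linarith⟩).2.2)
      linarith)
    (fun y s hy hs => by
      have h1 := hnn y hy.ge
      have h2 : 0 ≤ ‖y‖ ^ 2 / r1 ^ 2 := by positivity
      have h3 := hnear y hy.le s (hmem s hs).1 (hmem s hs).2.2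
      have h4 := hlam s hs
      linarith)
    (fun y s hy hs => by
      have h1 : 0 ≤ a * bF k M N (‖y‖ ^ 2) := hnn y (by rw [hy]; linarith)
      have h2 : ‖y‖ ^ 2 / r1 ^ 2 = 1 := by rw [hy]; field_simp
      have h3 := hu1 y (hin y hy.le) s (hmem s hs).2.1 (hmem s hs).2.2
      have h4 := hlam s hs
      linarith)
    (fun y A hy1 hy2 hA => by
      have hy0 : 0 < ‖y‖ := hm0.trans_le hy1
      have hc := hco y (hin y hy2)
      rw [dotp_eq] at hc
      have h1 := bF_ineq hθ hε hb₀ hks hN1 hN hB hA hy0 hc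
      have h2 := mul_le_mul_of_nonneg_left h1 ha0.le
      have h3 : a * -b₀ = -2 * (1 / τ1) := by rw [ha]; field_simp
      have h4 := hA.trace_le
      have h5 : inner ℝ (b y) y ≤ 0 := by nlinarith [sq_nonneg ‖y‖]
      have h6 : 1 / r1 ^ 2 * (2 * ε * A.trace + 2 * inner ℝ (b y) y) ≤ 1 / r1 ^ 2 * (2 * ε * (n / θ)) := by
        gcongr
        have : 2 * ε * A.trace ≤ 2 * ε * (n / θ) := by gcongr
        linarith
      have h7 : 1 / r1 ^ 2 * (2 * ε * (n / θ)) < 1 / τ1 := by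
        rw [lt_div_iff₀ hτ1]
        refine lt_of_eq_of_lt ?_ hτε
        field_simp
      linarith)
    x t hxm hx ⟨by linarith, le_rfl⟩
  have h8 : 1 / τ1 * (t - (t - τ1)) = 1 := by field_simp; ring
  have h9 := mul_le_mul_of_nonneg_left (bF_le hk0 hM0 N (ζ := ‖x‖ ^ 2) (Z := r1 ^ 2)
    (by have := hm0.trans_le hxm; positivity) (by gcongr)) ha0.le
  linarith

/-- smallness of `ε |log ε|` -/
lemma small_eps (c1 c2 r : ℝ) (hr : 0 < r) : ∃ ε₀ ∈ Ioo (0:ℝ) 1, ∀ ε ∈ Ioc 0 ε₀,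
    c1 * √ε < r ∧ c2 * (ε * (|Real.log ε| + 1)) < 1 := by
  have h1 : Tendsto (fun ε : ℝ => c1 * √ε) (𝓝[>] 0) (𝓝 0) := by
    have : Continuous (fun ε : ℝ => c1 * √ε) := by fun_prop
    have := this.tendsto 0
    simp only [Real.sqrt_zero, mul_zero] at this
    exact this.mono_left nhdsWithin_le_nhds
  have h2 : Tendsto (fun ε : ℝ => c2 * (ε * (|Real.log ε| + 1))) (𝓝[>] 0) (𝓝 0) := by
    have hc : Continuous (fun ε : ℝ => c2 * (|Real.log ε * ε| + |ε|)) := by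
      have := Real.continuous_mul_log
      have h' : Continuous (fun ε : ℝ => Real.log ε * ε) := by simpa only [mul_comm] using this
      fun_prop
    have := hc.tendsto 0
    simp only [mul_zero, abs_zero, add_zero] at this
    refine (this.mono_left nhdsWithin_le_nhds).congr' ?_
    filter_upwards [self_mem_nhdsWithin] with ε hε
    rw [abs_mul, abs_of_pos (show 0 < ε from hε)]; ring
  have h3 := (h1.eventually (gt_mem_nhds hr)).and (h2.eventually (gt_mem_nhds one_pos))
  obtain ⟨e, he, hh⟩ := mem_nhdsGT_iff_exists_Ioo_subset.1 h3
  have he : 0 < e := he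
  refine ⟨min (e / 2) (1 / 2), ⟨by positivity, (min_le_right _ _).trans_lt (by norm_num)⟩, fun ε hε => ?_⟩
  exact hh ⟨hε.1, (hε.2.trans (min_le_left _ _)).trans_lt (by linarith)⟩

/-- Proposition 2.6: smallness near the origin after a time of order `|log ε|`. -/
theorem stmt8 {n : ℕ} (θ₀ : ℝ) (hθ : θ₀ ∈ Set.Ioc (0:ℝ) 1)
    (Ω : Set (Eu n)) (ν : Eu n → Eu n) (b : Eu n → Eu n) (b₀ r₀ : ℝ)
    (hdom : IsBdC1With Ω ν) (h0 : (0 : Eu n) ∈ Ω)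
    (hbl : ∃ K : NNReal, LipschitzWith K b) (hb0 : b 0 = 0)
    (hgas : ∃ X : ℝ → Eu n → Eu n, GAS b X)
    (hb₀ : 0 < b₀) (hr₀ : 0 < r₀) (hsub : closedBall (0 : Eu n) r₀ ⊆ Ω)
    (hco : ∀ x ∈ ball (0 : Eu n) r₀, dotp (b x) x ≤ -b₀ * ‖x‖ ^ 2)
    (δ : ℝ) (hδ : 0 < δ) :
    ∃ ε₀ ∈ Set.Ioo (0:ℝ) 1, ∃ τ : ℝ → ℝ, ∃ γ ∈ Set.Ioo (0:ℝ) 1, ∃ C > (0:ℝ),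
      (∀ ε ∈ Set.Ioc (0:ℝ) ε₀, 0 < τ ε ∧ τ ε ≤ C * (|Real.log ε| + 1)) ∧
      ∀ ε ∈ Set.Ioc (0:ℝ) ε₀,
      ∀ (A : Eu n → ℝ → Matrix (Fin n) (Fin n) ℝ) (T : ℝ≥0∞),
        ENNReal.ofReal (τ ε) < T → MatC θ₀ A Ω T →
        ∀ u : Eu n → ℝ → ℝ, Classical21 u Ω T → SolveL ε A b u Ω T →
        (∀ x ∈ ball (0 : Eu n) r₀, ∀ t : ℝ, 0 < t → ENNReal.ofReal t < T → u x t ≤ 1) →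
        (∀ t : ℝ, 0 < t → ENNReal.ofReal t < T → u 0 t ≤ 0) →
        ∀ x ∈ ball (0 : Eu n) (γ * r₀), ∀ t : ℝ, τ ε < t → ENNReal.ofReal t < T →
          u x t ≤ δ := by
  obtain ⟨K, hK⟩ := hbl
  have hθ0 : 0 < θ₀ := hθ.1
  have hKb : ∀ x, ‖b x‖ ≤ (K:ℝ) * ‖x‖ := fun x => by
    have := hK.dist_le_mul x 0
    rwa [hb0, dist_zero_right, dist_zero_right] at this
  have hK0 : (0:ℝ) ≤ K := K.2
  obtain ⟨c2, hc2, hit⟩ := iter_origin n θ₀ hθ0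
  obtain ⟨J, hJ⟩ := exists_pow_lt_of_lt_one (half_pos hδ) (show 1 - c2 < 1 by linarith [hc2.1])
  set κ : ℝ := 1 / (20 * K + 1) with hκ
  have hκ0 : 0 < κ := by positivity
  have hκ1 : κ ≤ 1 := by rw [hκ, div_le_one (by positivity)]; linarith
  have hκK : κ ^ 2 * (K * 20) ≤ 1 := by
    have h1 : κ * (20 * K + 1) = 1 := by rw [hκ]; field_simp
    nlinarith
  set ks : ℝ := 20 * ((3 / 20) ^ J * κ) with hks
  have hks0 : 0 < ks := by positivity
  set tb : ℝ := 12 * κ ^ 2 * J with htb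
  have htb0 : 0 ≤ tb := by positivity
  set r1 := r₀ / 2 with hr1
  have hr10 : 0 < r1 := by positivity
  obtain ⟨N', hN'⟩ := exists_nat_ge ((n:ℝ) / θ₀ / (2 * θ₀))
  set N := N' + 1 with hNdef
  have hN : (n:ℝ) / θ₀ ≤ 2 * θ₀ * ((N:ℝ) + 1) := by
    rw [div_le_iff₀ (by positivity)] at hN'
    rw [hNdef]; push_cast
    nlinarith
  set B := 2 * (n:ℝ) / (θ₀ * ks ^ 2) with hB
  have hB0 : 0 ≤ B := by positivity
  set M := (B / b₀) ^ N with hM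
  have hM0 : 0 ≤ M := by positivity
  set L := |Real.log (r1 ^ 2) - Real.log (ks ^ 2)| + M + 1 with hL
  have hL1 : 1 ≤ L := by
    have := abs_nonneg (Real.log (r1 ^ 2) - Real.log (ks ^ 2)); linarith
  set C1 := 8 * L / (b₀ * δ) with hC1
  have hC10 : 0 < C1 := by positivity
  obtain ⟨ε₀, hε₀, hsm⟩ := small_eps (20 * κ) (2 * (n:ℝ) / (θ₀ * r1 ^ 2) * C1) r₀ hr₀
  refine ⟨ε₀, hε₀, fun ε => tb + C1 * (|Real.log ε| + 1), min (1 / 4) (δ / 4),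
    ⟨by positivity, (min_le_left _ _).trans_lt (by norm_num)⟩, tb + C1, by positivity, ?_, ?_⟩
  · intro ε hε
    have := abs_nonneg (Real.log ε)
    refine ⟨by positivity, ?_⟩
    nlinarith
  intro ε hε A T _ hA u hu hs hu1 hu0 x hx t ht htT
  have hε0 : 0 < ε := hε.1
  obtain ⟨hs1, hs2⟩ := hsm ε hε
  have hla := abs_nonneg (Real.log ε)
  have hraw := raw_of hA hu hs
  have hnear : ∀ x : Eu n, ‖x‖ ≤ ks * √ε → ∀ t, tb < t → ENNReal.ofReal t < T → u x t ≤ δ / 2 := by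
    intro x hx t ht htT
    refine (hit Ω b K κ ε r₀ T u _ _ _ hraw hKb hK0 hκ0 hε0 hκK (by linarith) hsub hu1 hu0 J x
      (by rw [hks] at hx; linarith) t ht htT).trans hJ.le
  have hxn : ‖x‖ < min (1 / 4) (δ / 4) * r₀ := by simpa using hx
  have hx4 : ‖x‖ ≤ 1 / 4 * r₀ := hxn.le.trans (by gcongr; exact min_le_left _ _)
  have hxd : ‖x‖ ≤ δ / 4 * r₀ := hxn.le.trans (by gcongr; exact min_le_right _ _)
  refine core_step (r1 := r1) (ks := ks) (B := B) (N := N) (tb := tb) (τ1 := C1 * (|Real.log ε| + 1)) hθ0 hε0 hb₀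
    hr10 (by linarith) hks0 hδ htb0 (by positivity) hraw hsub hco hu1 hnear (by omega) hN hB ?_ ?_ x
    (by linarith) ?_ t ht htT
  · refine lt_of_eq_of_lt ?_ hs2; ring
  · rw [Real.log_mul (by positivity) hε0.ne']
    have h1 : Real.log (r1 ^ 2) - (Real.log (ks ^ 2) + Real.log ε) + M ≤ L * (|Real.log ε| + 1) := by
      have e1 := le_abs_self (Real.log (r1 ^ 2) - Real.log (ks ^ 2))
      have e2 := neg_abs_le (Real.log ε)
      have e3 : |Real.log ε| ≤ L * |Real.log ε| := by nlinarith
      linarith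
    have h2 : 2 / (b₀ * (C1 * (|Real.log ε| + 1))) * (L * (|Real.log ε| + 1)) = δ / 4 := by
      have : 0 < |Real.log ε| + 1 := by positivity
      rw [hC1]; field_simp; norm_num
    rw [← h2]
    exact mul_le_mul_of_nonneg_left h1 (by positivity)
  · rw [div_le_iff₀ (by positivity)]
    have h1 : ‖x‖ * ‖x‖ ≤ (1 / 4 * r₀) * (δ / 4 * r₀) := by gcongr
    have h2 : δ / 4 * (r₀ / 2) ^ 2 = (1 / 4 * r₀) * (δ / 4 * r₀) := by ring
    rw [hr1, h2, sq]
    exact h1
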